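/- Let X ⊆ P^r_K be a non-degenerate variety of degree 5 and codimension 3 which is not a cone, and suppose X is arithmetically Cohen–Macaulay. Then dim X ≤ 6, X is arithmetically Gorenstein, and X is the Pfaffian variety defined by the five 4×4 Pfaffians of a skew symmetric 5×5 matrix of linear forms, its minimal free resolution being given by the Buchsbaum–Eisenbud complex. -/

import Mathlib

noncomputable section

open MvPolynomial

/-- The polynomial ring `S = K[x_0, …, x_r]`, the homogeneous coordinate ring of `ℙ^r_K`. -/
abbrev PS (K : Type) [Field K] (r : ℕ) : Type := MvPolynomial (Fin (r + 1)) K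

namespace AMD

variable (K : Type) [Field K] (r : ℕ)

/-- `I` is a homogeneous ideal of `S = K[x_0, …, x_r]`. -/
def IsHomIdeal (I : Ideal (PS K r)) : Prop :=
  ∀ p ∈ I, ∀ n : ℕ, homogeneousComponent n p ∈ I

/-- `X = V_+(I)` is non-degenerate: `I` contains no nonzero linear form. -/
def Nondeg (I : Ideal (PS K r)) : Prop :=
  ∀ p ∈ I, p.IsHomogeneous 1 → p = 0

/-- The irrelevant maximal ideal of the homogeneous coordinate ring `A_X = S/I`. -/
def maxIdl (I : Ideal (PS K r)) : Ideal (PS K r ⧸ I) :=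
  (Ideal.span (Set.range (X : Fin (r + 1) → PS K r))).map (Ideal.Quotient.mk I)

/-- `dim X = d`, i.e. the Krull dimension of `A_X = S/I` equals `d + 1`. -/
def DimEq (I : Ideal (PS K r)) (d : ℕ) : Prop :=
  ringKrullDim (PS K r ⧸ I) = (((d : ℕ∞) + 1 : ℕ∞) : WithBot ℕ∞)

/-- The degree-`n` homogeneous component of `A_X = S/I`, as a `K`-subspace. -/
def quotComponent (I : Ideal (PS K r)) (n : ℕ) : Submodule K (PS K r ⧸ I) :=
  (homogeneousSubmodule (Fin (r + 1)) K n).map (Ideal.Quotient.mkₐ K I).toLinearMap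

/-- The Hilbert series of the graded algebra `A_X = S/I`. -/
def hilbSeries (I : Ideal (PS K r)) : PowerSeries ℤ :=
  PowerSeries.mk fun n => (Module.finrank K (quotComponent K r I n) : ℤ)

/-- `deg X = e`, where `d = dim X`:  the numerator polynomial of the Hilbert series of
`A_X` with respect to the denominator `(1 - λ)^(d+1)` takes the value `e` at `λ = 1`. -/
def DegreeEq (I : Ideal (PS K r)) (d e : ℕ) : Prop :=
  ∃ h : Polynomial ℤ,
    hilbSeries K r I * (1 - PowerSeries.X) ^ (d + 1) = PowerSeries.mk (fun n => h.coeff n) ∧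
    h.eval 1 = (e : ℤ)

/-- A graded automorphism of `S`, i.e. a linear change of coordinates of `ℙ^r_K`. -/
def IsGrAut (φ : PS K r ≃ₐ[K] PS K r) : Prop :=
  ∀ i, (φ (X i)).IsHomogeneous 1

/-- `X = V_+(I) ⊆ ℙ^r_K` is a cone (over a variety lying in some hyperplane): after a
linear change of coordinates, `I` is generated by polynomials not involving the last
variable. -/
def IsConeIdeal (I : Ideal (PS K r)) : Prop :=
  ∃ φ : PS K r ≃ₐ[K] PS K r, IsGrAut K r φ ∧
    ∃ J : Ideal (MvPolynomial (Fin r) K),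
      Ideal.map φ I = Ideal.map (rename (Fin.castSucc : Fin r → Fin (r + 1))) J

/-- A (weakly) regular sequence on the ring `A`. -/
def IsRegSeq {A : Type} [CommRing A] (rs : List A) : Prop :=
  ∀ (i : Fin rs.length) (y : A),
    rs.get i * y ∈ Ideal.span {x | x ∈ rs.take i.1} → y ∈ Ideal.span {x | x ∈ rs.take i.1}

/-- `depth A_X = t`: the maximal length of a regular sequence on `A_X = S/I` consisting
of elements of the irrelevant maximal ideal is `t`. -/
def DepthEq (I : Ideal (PS K r)) (t : ℕ) : Prop :=
  (∃ rs : List (PS K r ⧸ I), rs.length = t ∧ (∀ x ∈ rs, x ∈ maxIdl K r I) ∧ IsRegSeq rs) ∧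
  ∀ rs : List (PS K r ⧸ I), (∀ x ∈ rs, x ∈ maxIdl K r I) → IsRegSeq rs → rs.length ≤ t

/-- `X` is arithmetically Cohen-Macaulay: `depth A_X = dim A_X`. -/
def IsACM (I : Ideal (PS K r)) : Prop :=
  ∃ t : ℕ, ringKrullDim (PS K r ⧸ I) = ((t : ℕ∞) : WithBot ℕ∞) ∧ DepthEq K r I t

/-- The socle `{y | m·y = 0}` of `B`, as a `K`-subspace of `B`. -/
def socle (B : Type) [CommRing B] [Algebra K B] (m : Ideal B) : Submodule K B where
  carrier := {y | ∀ z ∈ m, z * y = 0}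
  add_mem' := by
    intro a b ha hb z hz
    rw [mul_add, ha z hz, hb z hz, add_zero]
  zero_mem' := by
    intro z hz
    rw [mul_zero]
  smul_mem' := by
    intro c y hy z hz
    rw [mul_smul_comm, hy z hz, smul_zero]

/-- `X` is arithmetically Gorenstein: `A_X = S/I` is Cohen-Macaulay and its Artinian
reduction by a maximal regular sequence has a one-dimensional socle. -/
def IsArithGorenstein (I : Ideal (PS K r)) : Prop :=
  ∃ (t : ℕ) (rs : List (PS K r ⧸ I)),
    ringKrullDim (PS K r ⧸ I) = ((t : ℕ∞) : WithBot ℕ∞) ∧ rs.length = t ∧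
    (∀ x ∈ rs, x ∈ maxIdl K r I) ∧ IsRegSeq rs ∧
    Module.finrank K
      (socle K ((PS K r ⧸ I) ⧸ Ideal.span {x | x ∈ rs})
        (Ideal.map (Ideal.Quotient.mk (Ideal.span {x | x ∈ rs})) (maxIdl K r I))) = 1

/-- The graded free `S`-module with `β j` generators in "row `j`" for each `j : ℕ`. -/
abbrev FreeGr (β : ℕ → ℕ) : Type := ((j : ℕ) × Fin (β j)) →₀ PS K r

/-- `φ` is a minimal graded homomorphism of graded free modules, where the generator
`(j, t)` of the source has degree `m₁ + j` and the generator `(j', t')` of the target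
has degree `m₂ + j'`: every matrix entry of `φ` is either zero or homogeneous of the
appropriate positive degree. -/
def IsMinGrMap (b₁ b₂ : ℕ → ℕ) (m₁ m₂ : ℕ)
    (φ : FreeGr K r b₁ →ₗ[PS K r] FreeGr K r b₂) : Prop :=
  ∀ (j : ℕ) (t : Fin (b₁ j)) (j' : ℕ) (t' : Fin (b₂ j')),
    (φ (Finsupp.single ⟨j, t⟩ 1)) ⟨j', t'⟩ = 0 ∨
      ∃ dd : ℕ, 1 ≤ dd ∧ dd + (m₂ + j') = m₁ + j ∧
        ((φ (Finsupp.single ⟨j, t⟩ 1)) ⟨j', t'⟩).IsHomogeneous dd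

/-- `b` is the Betti diagram of the ideal `I ⊆ S`, i.e.
`b i j = dim_K Tor_i^S(K, S/I)_{i+j}` for all `i ≥ 1`.  This is expressed by the
existence of a minimal graded free resolution `⋯ → F₂ → F₁ → S → S/I → 0` of `S/I`
in which, for `i ≥ 1`, the free module `F_i` has exactly `b i j` generators of degree
`i + j`. -/
def HasBettiDiagram (I : Ideal (PS K r)) (b : ℕ → ℕ → ℕ) : Prop :=
  ∃ (φ : (i : ℕ) → (FreeGr K r (b (i + 2)) →ₗ[PS K r] FreeGr K r (b (i + 1))))
    (ε : FreeGr K r (b 1) →ₗ[PS K r] PS K r),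
    (∀ (j : ℕ) (t : Fin (b 1 j)), (ε (Finsupp.single ⟨j, t⟩ 1)).IsHomogeneous (1 + j)) ∧
    (∀ i, IsMinGrMap K r (b (i + 2)) (b (i + 1)) (i + 2) (i + 1) (φ i)) ∧
    LinearMap.range ε = I ∧
    LinearMap.ker ε = LinearMap.range (φ 0) ∧
    ∀ i, LinearMap.ker (φ i) = LinearMap.range (φ (i + 1))

/-- The Pfaffian of a (skew-symmetric) `4 × 4` matrix. -/
def pfaff4 {R : Type} [CommRing R] (N : Matrix (Fin 4) (Fin 4) R) : R :=
  N 0 1 * N 2 3 - N 0 2 * N 1 3 + N 0 3 * N 1 2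

/-- The five submaximal (`4 × 4`) Pfaffians of a skew-symmetric `5 × 5` matrix. -/
def subPfaffian {R : Type} [CommRing R] (M : Matrix (Fin 5) (Fin 5) R) (i : Fin 5) : R :=
  pfaff4 (M.submatrix i.succAbove i.succAbove)

/-- `X = V_+(I)` is the Pfaffian variety defined by the five `4 × 4` Pfaffians of a
skew-symmetric `5 × 5` matrix of linear forms. -/
def IsPfaffianVariety (I : Ideal (PS K r)) : Prop :=
  ∃ M : Matrix (Fin 5) (Fin 5) (PS K r),
    M.transpose = -M ∧ (∀ i j, (M i j).IsHomogeneous 1) ∧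
    I = Ideal.span (Set.range (subPfaffian M))

/-- The vanishing ideal of the coordinate point `(0 : ⋯ : 0 : 1) ∈ ℙ^{r+1}_K`. -/
def pointIdl : Ideal (PS K (r + 1)) :=
  Ideal.span ((X : Fin (r + 2) → PS K (r + 1)) '' {i : Fin (r + 2) | i ≠ Fin.last (r + 1)})

/-- `X = V_+(I) ⊆ ℙ^r_K` is the image of `Z = V_+(J) ⊆ ℙ^{r+1}_K` under the projection
from a point `P ∈ ℙ^{r+1}_K ∖ Z`: after a linear change of coordinates moving `P` to
`(0 : ⋯ : 0 : 1)`, the ideal `I` is the contraction of `J` to `K[x_0, …, x_r]`. -/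
def IsProjectionOf (I : Ideal (PS K r)) (J : Ideal (PS K (r + 1))) : Prop :=
  ∃ ψ : PS K (r + 1) ≃ₐ[K] PS K (r + 1), IsGrAut K (r + 1) ψ ∧
    ¬ Ideal.map ψ J ≤ pointIdl K r ∧
    I = Ideal.comap (rename (Fin.castSucc : Fin (r + 1) → Fin (r + 2))) (Ideal.map ψ J)

/-- The ideal of the Veronese surface `F ⊆ ℙ^5_K`, generated by the `2 × 2` minors of
the generic symmetric `3 × 3` matrix with rows `(x₀,x₁,x₂), (x₁,x₃,x₄), (x₂,x₄,x₅)`. -/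
def veroneseIdeal : Ideal (PS K 5) :=
  Ideal.span {X 0 * X 3 - X 1 * X 1, X 0 * X 4 - X 1 * X 2, X 1 * X 4 - X 2 * X 3,
    X 0 * X 5 - X 2 * X 2, X 1 * X 5 - X 2 * X 4, X 3 * X 5 - X 4 * X 4}

/-- The determinant of the generic symmetric `3 × 3` matrix defining the Veronese
surface; it cuts out the secant variety of `F ⊆ ℙ^5_K`. -/
def veroneseDet : PS K 5 :=
  X 0 * X 3 * X 5 - X 0 * X 4 * X 4 - X 1 * X 1 * X 5 + 2 * (X 1 * X 2 * X 4) -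
    X 2 * X 2 * X 3

/-- `X = V_+(I) ⊆ ℙ^4_K` is a generic projection of the Veronese surface `F ⊆ ℙ^5_K`,
i.e. the projection of `F` from a point `P ∈ ℙ^5_K ∖ F` at which the generic symmetric
`3 × 3` matrix `M` has rank `3` (equivalently, `P` does not lie on the secant variety
`{det M = 0}` of `F`). -/
def IsGenProjVeronese4 (I : Ideal (PS K 4)) : Prop :=
  ∃ ψ : PS K 5 ≃ₐ[K] PS K 5, IsGrAut K 5 ψ ∧
    ¬ Ideal.map ψ (Ideal.span {veroneseDet K}) ≤ pointIdl K 4 ∧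
    I = Ideal.comap (rename (Fin.castSucc : Fin 5 → Fin 6)) (Ideal.map ψ (veroneseIdeal K))

/-- `X = V_+(I) ⊆ ℙ^r_K` is a generic projection of the Veronese surface (which forces
`r = 4`). -/
def IsGenProjVeronese (I : Ideal (PS K r)) : Prop :=
  ∃ h : r + 1 = 5, IsGenProjVeronese4 K (Ideal.map (rename (Fin.cast h)) I)

/-- `X = V_+(I) ⊆ ℙ^r_K` is a generic projection of (a cone over) the Veronese surface
`F ⊆ ℙ^5_K`:  `X` is the projection of a cone `Z ⊆ ℙ^{r+1}_K` over `F` from a point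
not lying on the (cone over the) secant variety of `F`. -/
def IsGenProjVeroneseCone (I : Ideal (PS K r)) : Prop :=
  ∃ (h : 6 ≤ r + 2) (ψ : PS K (r + 1) ≃ₐ[K] PS K (r + 1)), IsGrAut K (r + 1) ψ ∧
    ¬ Ideal.map ψ (Ideal.map (rename (Fin.castLE h))
        (Ideal.span {veroneseDet K})) ≤ pointIdl K r ∧
    I = Ideal.comap (rename (Fin.castSucc : Fin (r + 1) → Fin (r + 2)))
      (Ideal.map ψ (Ideal.map (rename (Fin.castLE h)) (veroneseIdeal K)))

/-- The ideal of the rational normal scroll `S(a_1, …, a_k)`, generated by the `2 × 2`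
minors of the standard `2 × (Σ a_i)` matrix of indeterminates. -/
def scrollIdeal (k : ℕ) (a : Fin k → ℕ) :
    Ideal (MvPolynomial ((i : Fin k) × Fin (a i + 1)) K) :=
  Ideal.span {p | ∃ (i : Fin k) (j : Fin (a i)) (i' : Fin k) (j' : Fin (a i')),
    p = X ⟨i, j.castSucc⟩ * X ⟨i', j'.succ⟩ - X ⟨i, j.succ⟩ * X ⟨i', j'.castSucc⟩}

/-- The affine cone in `K^{r+2}` of the projective scheme `V_+(J) ⊆ ℙ^{r+1}_K`. -/
def zeroSet (J : Ideal (PS K (r + 1))) : Set (Fin (r + 2) → K) :=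
  {v | ∀ f ∈ J, MvPolynomial.eval v f = 0}

/-- Restriction of polynomials to the plane spanned by the vectors `p` and `q`
(i.e. to the line through the corresponding projective points). -/
def lineRestrict (p q : Fin (r + 2) → K) : PS K (r + 1) →ₐ[K] MvPolynomial (Fin 2) K :=
  aeval fun i => MvPolynomial.C (p i) * X 0 + MvPolynomial.C (q i) * X 1

/-- The line through the (independent) points `p`, `q` is a secant line of
`Z = V_+(J)`: the scheme `Z ∩ L ⊆ L ≅ ℙ^1` has length at least `2`, i.e. the
restriction of `J` to the line is contained in a principal ideal generated by a
form of degree `≥ 2` (or is zero, in which case `L ⊆ Z`). -/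
def IsSecantLine (J : Ideal (PS K (r + 1))) (p q : Fin (r + 2) → K) : Prop :=
  ∃ h : MvPolynomial (Fin 2) K,
    (∀ f ∈ J, lineRestrict K r p q f ∈ Ideal.span {h}) ∧
    (h = 0 ∨ ∃ dd : ℕ, 2 ≤ dd ∧ h.IsHomogeneous dd)

/-- The (affine cone over the) secant cone `Sec_P(Z)` of `Z = V_+(J)` with respect to
the point `P = [p]`: the union of `{P}` and of all secant lines of `Z` through `P`. -/
def secantCone (J : Ideal (PS K (r + 1))) (p : Fin (r + 2) → K) : Set (Fin (r + 2) → K) :=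
  {v | ∃ a : K, v = a • p} ∪
    {v | ∃ q : Fin (r + 2) → K, LinearIndependent K ![p, q] ∧ IsSecantLine K r J p q ∧
      ∃ a b : K, v = a • p + b • q}

/-- The (homogeneous) vanishing ideal of a subset of the affine cone `K^{r+2}`. -/
def vanishingIdl (T : Set (Fin (r + 2) → K)) : Ideal (PS K (r + 1)) where
  carrier := {f | ∀ v ∈ T, MvPolynomial.eval v f = 0}
  add_mem' := by
    intro a b ha hb v hv
    rw [map_add, ha v hv, hb v hv, add_zero]
  zero_mem' := by
    intro v hv
    rw [map_zero]
  smul_mem' := by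
    intro c f hf v hv
    rw [smul_eq_mul, map_mul, hf v hv, mul_zero]

/-- `X = V_+(I) ⊆ ℙ^r_K` is the image of `Z = V_+(J) ⊆ ℙ^{r+1}_K` under the linear
projection `π : ℙ^{r+1}_K ∖ {P} → ℙ^r_K` from the point `P = [p]`:  `I` is the
contraction of `J` along the substitution homomorphism induced by a surjective linear
map `K^{r+2} → K^{r+1}` with kernel `K·p`. -/
def IsProjectionFromPoint (I : Ideal (PS K r)) (J : Ideal (PS K (r + 1)))
    (p : Fin (r + 2) → K) : Prop :=
  ∃ π : (Fin (r + 2) → K) →ₗ[K] (Fin (r + 1) → K),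
    Function.Surjective π ∧ LinearMap.ker π = Submodule.span K {p} ∧
    I = Ideal.comap
      (aeval (fun j : Fin (r + 1) =>
        ∑ i : Fin (r + 2), MvPolynomial.C (π (Pi.single i 1) j) * X i) :
          PS K r →ₐ[K] PS K (r + 1)) J

end AMD

/-!
Let `A = S / I` and let `T = K[ℓ₀, …, ℓ_d]` for a regular sequence of linear forms. The Artinian
reduction `B = A / (ℓ₀, …, ℓ_d)` has Hilbert series `1 + 3 t + h t²`, where degree `5` forces
`h = 1`.
Now `A` is free over `T`, with a basis `1, e₁, e₂, e₃, w` lifted from `B`. If a linear form `y`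
paired trivially with `B₁` into `B₂ = K w`, then the `w`-row of multiplication by `y` on `A` would
have its diagonal entry `c ∈ T` as only nonzero entry, so `y - c` would be a zero divisor of the
domain `A`; hence `y ∈ T`, that is `y = 0` in `B`. So the pairing `B₁ × B₁ → B₂` is perfect and
`B` has a one-dimensional socle.

Over an algebraically closed field the pairing has a normal form, and `B` is cut out by five
explicit quadrics. Their lifts to `A` express five products of the `eᵢ` with coefficients in `T`,
and associativity of `A` forces these coefficients to be such that the five lifts are the Pfaffians
of an explicit skew-symmetric matrix of linear forms. The Pfaffian ideal is contained in `I` and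
agrees with it modulo the regular sequence, so it is `I`. Ten linear forms in more than ten
variables have a common zero, and then `X` is a cone over it. Exactness of the Buchsbaum–Eisenbud
complex is elementary here: on the left it uses that one of the Pfaffians, a quadric in the prime
`I`, is a prime element, and in the middle it is a comparison of Hilbert functions.
-/

namespace AMD

section RegularSequences

open RingTheory.Sequence

variable {S : Type*} [CommRing S] {J : Ideal S}

theorem isWeaklyRegular_quotient_iff {xs : List S} :
    IsWeaklyRegular (S ⧸ J) xs ↔
      ∀ i (h : i < xs.length), IsSMulRegular (S ⧸ (J ⊔ Ideal.ofList (xs.take i))) xs[i] := by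
  have equiv (a : Ideal S) : ((S ⧸ J) ⧸ (a • ⊤ : Submodule S (S ⧸ J))) ≃ₗ[S] S ⧸ (J ⊔ a) :=
    (Submodule.quotEquivOfEq _ _ <| by
      rw [← Submodule.range_mkQ J, ← Submodule.map_top, ← Submodule.map_smul'', smul_eq_mul,
        Ideal.mul_top]).trans (Submodule.quotientQuotientEquivQuotientSup J a)
  exact ⟨fun h i hi => ((equiv _).isSMulRegular_congr _).1 (h.regular_mod_prev i hi),
    fun h => ⟨fun i hi => ((equiv _).isSMulRegular_congr _).2 (h i hi)⟩⟩

theorem isWeaklyRegular_quotient_cons_iff {x : S} {xs : List S} :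
    IsWeaklyRegular (S ⧸ J) (x :: xs) ↔
      IsSMulRegular (S ⧸ J) x ∧ IsWeaklyRegular (S ⧸ (J ⊔ Ideal.span {x})) xs := by
  simp only [isWeaklyRegular_quotient_iff, isSMulRegular_quotient_iff_mem_of_smul_mem]
  constructor
  · intro h
    refine ⟨fun y hy => ?_, fun i hi y hy => ?_⟩
    · simpa using h 0 (by simp) y (by simpa using hy)
    · simpa [sup_assoc] using h (i + 1) (by simpa using hi) y (by simpa [sup_assoc] using hy)
  · rintro ⟨hx, hxs⟩ (_ | i) hi
    · simpa using hx
    · simpa [sup_assoc] using hxs i (by simpa using hi)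

theorem isSMulRegular_sup_span_singleton_of_regular {x y : S} (hx : IsSMulRegular (S ⧸ J) x)
    (hy : IsSMulRegular (S ⧸ (J ⊔ Ideal.span {x})) y) :
    IsSMulRegular (S ⧸ (J ⊔ Ideal.span {y})) x := by
  rw [isSMulRegular_quotient_iff_mem_of_smul_mem] at *
  simp only [smul_eq_mul, Submodule.mem_sup, Ideal.mem_span_singleton'] at *
  rintro u ⟨j, hj, _, ⟨v, rfl⟩, hu⟩
  obtain ⟨j', hj', _, ⟨w, rfl⟩, hv⟩ :=
    hy v ⟨-j, J.neg_mem hj, _, ⟨u, rfl⟩, by linear_combination -hu⟩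
  refine ⟨_, hx (u - y * w) ?_, _, ⟨w, rfl⟩, by ring⟩
  rw [show x * (u - y * w) = j + j' * y by linear_combination -hu - y * hv]
  exact J.add_mem hj (J.mul_mem_right _ hj')

theorem isWeaklyRegular_dropLast_of_forall_regular {y : S} {xs : List S}
    (hxs : IsWeaklyRegular (S ⧸ J) xs)
    (hy : ∀ i < xs.length, IsSMulRegular (S ⧸ (J ⊔ Ideal.ofList (xs.take i))) y) :
    IsWeaklyRegular (S ⧸ (J ⊔ Ideal.span {y})) xs.dropLast := by
  rw [isWeaklyRegular_quotient_iff] at hxs ⊢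
  intro i hi
  have hi' : i + 1 < xs.length := by simpa [Nat.lt_sub_iff_add_lt] using hi
  have hy_next := hy (i + 1) hi'
  have htake : xs.dropLast.take i = xs.take i := by
    rw [List.dropLast_eq_take, List.take_take, min_eq_left (by omega)]
  rw [← List.take_concat_get' _ _ (by omega), Ideal.ofList_append, Ideal.ofList_singleton,
    ← sup_assoc] at hy_next
  rw [List.getElem_dropLast, sup_right_comm, htake]
  exact isSMulRegular_sup_span_singleton_of_regular (hxs i (by omega)) hy_next

theorem isRegSeq_iff_isWeaklyRegular {A : Type} [CommRing A] {rs : List A} :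
    IsRegSeq rs ↔ IsWeaklyRegular A rs := by
  simp only [isWeaklyRegular_iff_Fin, isSMulRegular_quotient_iff_mem_of_smul_mem, smul_eq_mul,
    Ideal.mul_top]
  rfl

theorem isRegSeq_map_mk_iff {S : Type} [CommRing S] {J : Ideal S} {xs : List S} :
    IsRegSeq (xs.map (Ideal.Quotient.mk J)) ↔ IsWeaklyRegular (S ⧸ J) xs := by
  rw [isRegSeq_iff_isWeaklyRegular]
  exact isWeaklyRegular_map_algebraMap_iff (S ⧸ J) (S ⧸ J) xs

end RegularSequences

section LinearNonzerodivisors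

open RingTheory.Sequence

variable {K : Type} [Field K] {r : ℕ}

theorem exists_linear_isSMulRegular [Infinite K] {ι : Type*} [Finite ι] (J : ι → Ideal (PS K r))
    (hJ : ∀ i, ∃ x ∈ idealOfVars (Fin (r + 1)) K, IsSMulRegular (PS K r ⧸ J i) x) :
    ∃ l : PS K r, l.IsHomogeneous 1 ∧ ∀ i, IsSMulRegular (PS K r ⧸ J i) l := by
  classical
  let primes := ⋃ i, associatedPrimes (PS K r) (PS K r ⧸ J i)
  have finite_primes : primes.Finite :=
    Set.finite_iUnion fun i => associatedPrimes.finite (PS K r) (PS K r ⧸ J i)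
  let linearPart (P : Ideal (PS K r)) : Subspace K (homogeneousSubmodule (Fin (r + 1)) K 1) :=
    (P.restrictScalars K).comap (Submodule.subtype _)
  have mem_iff (i : ι) (x : PS K r) : IsSMulRegular (PS K r ⧸ J i) x ↔
      ∀ P ∈ associatedPrimes (PS K r) (PS K r ⧸ J i), x ∉ P := by
    have := Set.ext_iff.1 (biUnion_associatedPrimes_eq_compl_regular (PS K r) (PS K r ⧸ J i)) x
    simp only [Set.mem_iUnion, Set.mem_compl_iff, Set.mem_ofPred_eq] at this
    simpa using (not_congr this).symm
  have avoids := Subspace.biUnion_ne_univ_of_top_notMem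
    (s := finite_primes.toFinset.image linearPart) <| by
    simp only [Finset.mem_image, Set.Finite.mem_toFinset, not_exists, not_and]
    intro P hP htop
    obtain ⟨i, hP⟩ := Set.mem_iUnion.1 hP
    obtain ⟨x, hx, hreg⟩ := hJ i
    refine (mem_iff i x).1 hreg P hP (Ideal.span_le.2 ?_ hx)
    rintro _ ⟨j, rfl⟩
    have : (⟨X j, isHomogeneous_X K j⟩ : homogeneousSubmodule (Fin (r + 1)) K 1) ∈
        linearPart P := htop ▸ Submodule.mem_top
    exact this
  obtain ⟨l, hl⟩ := (Set.ne_univ_iff_exists_notMem _).1 avoids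
  refine ⟨l, l.2, fun i => (mem_iff i _).2 fun P hP hlP => hl ?_⟩
  simp only [Set.mem_iUnion]
  exact ⟨linearPart P, Finset.mem_image_of_mem _
    (finite_primes.mem_toFinset.2 (Set.mem_iUnion.2 ⟨i, hP⟩)), hlP⟩

theorem exists_linear_isWeaklyRegular [Infinite K] {J : Ideal (PS K r)} {xs : List (PS K r)}
    (hxs : ∀ x ∈ xs, x ∈ idealOfVars (Fin (r + 1)) K) (hreg : IsWeaklyRegular (PS K r ⧸ J) xs) :
    ∃ ls : List (PS K r), ls.length = xs.length ∧ (∀ l ∈ ls, l.IsHomogeneous 1) ∧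
      IsWeaklyRegular (PS K r ⧸ J) ls := by
  induction hn : xs.length generalizing J xs with
  | zero => exact ⟨[], rfl, by simp, .nil _ _⟩
  | succ n ih =>
    obtain ⟨l, hl, hlreg⟩ := exists_linear_isSMulRegular
      (fun i : Fin xs.length => J ⊔ Ideal.ofList (xs.take i))
      fun i => ⟨xs[i], hxs _ (List.getElem_mem _), isWeaklyRegular_quotient_iff.1 hreg i i.2⟩
    obtain ⟨ls, hlen, hls, hlsreg⟩ := ih (xs := xs.dropLast)
      (fun x hx => hxs x (List.mem_of_mem_dropLast hx))
      (isWeaklyRegular_dropLast_of_forall_regular hreg fun i hi => hlreg ⟨i, hi⟩) (by simp [hn])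
    have hl₀ : IsSMulRegular (PS K r ⧸ J) l := by
      have := hlreg ⟨0, by omega⟩
      rw [isSMulRegular_quotient_iff_mem_of_smul_mem] at this ⊢
      simpa using this
    exact ⟨l :: ls, by simp [hlen], by simpa [hl] using hls,
      isWeaklyRegular_quotient_cons_iff.2 ⟨hl₀, hlsreg⟩⟩

theorem DepthEq.exists_linear_isWeaklyRegular [Infinite K] {I : Ideal (PS K r)} {t : ℕ}
    (h : DepthEq K r I t) :
    ∃ ls : List (PS K r), ls.length = t ∧ (∀ l ∈ ls, l.IsHomogeneous 1) ∧
      IsWeaklyRegular (PS K r ⧸ I) ls := by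
  obtain ⟨⟨rs, rfl, hrs, hreg⟩, -⟩ := h
  choose! f hf using fun x hx => (Ideal.mem_map_iff_of_surjective _
    Ideal.Quotient.mk_surjective).1 (hrs x hx)
  have hmap : (rs.map f).map (Ideal.Quotient.mk I) = rs := by
    rw [List.map_map]
    exact (List.map_congr_left fun x hx => (hf x hx).2).trans rs.map_id
  rw [← hmap, isRegSeq_map_mk_iff] at hreg
  simpa using AMD.exists_linear_isWeaklyRegular
    (List.forall_mem_map.2 fun x hx => (hf x hx).1) hreg

end LinearNonzerodivisors

section HomogeneousIdeals

attribute [local instance] MvPolynomial.gradedAlgebra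

theorem homogeneousComponent_add_mul {σ R : Type*} [CommSemiring R] {g : MvPolynomial σ R} {k : ℕ}
    (hg : g.IsHomogeneous k) (f : MvPolynomial σ R) (n : ℕ) :
    homogeneousComponent (n + k) (f * g) = homogeneousComponent n f * g := by
  have := DirectSum.coe_decompose_mul_add_of_right_mem (homogeneousSubmodule σ R) (i := n)
    (a := f) hg
  rwa [← decomposition.decompose'_apply, ← decomposition.decompose'_apply]

theorem homogeneousComponent_mul_eq_zero {σ R : Type*} [CommSemiring R] {g : MvPolynomial σ R}
    {k n : ℕ} (hg : g.IsHomogeneous k) (f : MvPolynomial σ R) (hn : n < k) :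
    homogeneousComponent n (f * g) = 0 := by
  rw [← decomposition.decompose'_apply]
  exact DirectSum.coe_decompose_mul_of_right_mem_of_not_le (homogeneousSubmodule σ R) hg
    (not_le.2 hn)

variable {K : Type} [Field K] {r : ℕ} {I J : Ideal (PS K r)}

theorem isHomIdeal_iff :
    IsHomIdeal K r I ↔ I.IsHomogeneous (homogeneousSubmodule (Fin (r + 1)) K) := by
  simp only [IsHomIdeal, ← decomposition.decompose'_apply]
  exact ⟨fun h n f hf => h f hf n, fun h f hf n => h n hf⟩

theorem IsHomIdeal.sup (hI : IsHomIdeal K r I) (hJ : IsHomIdeal K r J) :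
    IsHomIdeal K r (I ⊔ J) :=
  isHomIdeal_iff.2 ((isHomIdeal_iff.1 hI).sup (isHomIdeal_iff.1 hJ))

theorem isHomIdeal_span {s : Set (PS K r)} (hs : ∀ f ∈ s, ∃ n, f.IsHomogeneous n) :
    IsHomIdeal K r (Ideal.span s) :=
  isHomIdeal_iff.2 (Ideal.homogeneous_span _ s hs)

theorem IsHomIdeal.mem_iff (hI : IsHomIdeal K r I) {f : PS K r} :
    f ∈ I ↔ ∀ n, homogeneousComponent n f ∈ I :=
  mem_iff_homogeneousComponent_mem (isHomIdeal_iff.1 hI) f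

theorem IsHomIdeal.exists_eq_add_sum_mul (hJ : IsHomIdeal K r J) {ι : Type*} [Fintype ι]
    {b : ι → PS K r} {f : PS K r} {n k : ℕ} (hb : ∀ i, (b i).IsHomogeneous k)
    (hf : f.IsHomogeneous (n + k)) (h : f ∈ J ⊔ Ideal.span (Set.range b)) :
    ∃ j ∈ J, ∃ g : ι → PS K r, (∀ i, (g i).IsHomogeneous n) ∧ f = j + ∑ i, g i * b i := by
  obtain ⟨j, hj, _, hb', rfl⟩ := Submodule.mem_sup.1 h
  obtain ⟨g, rfl⟩ := Ideal.mem_span_range_iff_exists_fun.1 hb'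
  refine ⟨homogeneousComponent (n + k) j, hJ j hj _, fun i => homogeneousComponent n (g i),
    fun i => homogeneousComponent_isHomogeneous _ _, ?_⟩
  rw [← homogeneousComponent_eq_self hf, map_add, map_sum]
  simp only [homogeneousComponent_add_mul (hb _)]

theorem IsHomIdeal.exists_eq_add_mul (hJ : IsHomIdeal K r J) {l f : PS K r} {n k : ℕ}
    (hl : l.IsHomogeneous k) (hf : f.IsHomogeneous (n + k)) (h : f ∈ J ⊔ Ideal.span {l}) :
    ∃ j ∈ J, ∃ g : PS K r, g.IsHomogeneous n ∧ f = j + g * l := by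
  obtain ⟨j, hj, g, hg, rfl⟩ := hJ.exists_eq_add_sum_mul (b := fun _ : Unit => l)
    (fun _ => hl) hf (by rwa [Set.range_const])
  exact ⟨j, hj, g (), hg (), by simp⟩

theorem IsHomIdeal.mem_of_mem_sup_span (hJ : IsHomIdeal K r J) {s : Set (PS K r)} {f : PS K r}
    {n k : ℕ} (hs : ∀ g ∈ s, g.IsHomogeneous k) (hf : f.IsHomogeneous n) (hnk : n < k)
    (h : f ∈ J ⊔ Ideal.span s) : f ∈ J := by
  obtain ⟨j, hj, b, hb, rfl⟩ := Submodule.mem_sup.1 h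
  have component_eq_zero : homogeneousComponent n b = 0 := by
    obtain ⟨c, hc, rfl⟩ := Submodule.mem_span_set.1 hb
    rw [Finsupp.sum, map_sum]
    exact Finset.sum_eq_zero fun g hg => homogeneousComponent_mul_eq_zero (hs g (hc hg)) _ hnk
  rw [← homogeneousComponent_eq_self hf, map_add, component_eq_zero, add_zero]
  exact hJ j hj n

theorem mem_pow_idealOfVars_of_isHomogeneous {k n : ℕ} {f : PS K r} (hf : f.IsHomogeneous n)
    (hkn : k ≤ n) : f ∈ idealOfVars (Fin (r + 1)) K ^ k := by
  refine (mem_pow_idealOfVars_iff k f).2 fun x hx => hkn.trans_eq ?_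
  rw [Finsupp.degree_eq_weight_one]
  exact (hf (mem_support_iff.1 hx)).symm

theorem mem_of_isHomogeneous_of_le {n m : ℕ} (h : ∀ f : PS K r, f.IsHomogeneous n → f ∈ I)
    (hnm : n ≤ m) {f : PS K r} (hf : f.IsHomogeneous m) : f ∈ I := by
  have hpow : idealOfVars (Fin (r + 1)) K ^ n ≤ I := by
    rw [pow_idealOfVars_eq_span, Ideal.span_le]
    rintro _ ⟨x, hx, rfl⟩
    exact h _ (isHomogeneous_monomial _ (by simpa using hx))
  exact hpow (mem_pow_idealOfVars_of_isHomogeneous hf hnm)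

theorem eq_zero_of_mem_of_isHomogeneous_zero (hI : I ≠ ⊤) {f : PS K r} (hf : f ∈ I)
    (hf₀ : f.IsHomogeneous 0) : f = 0 := by
  rw [← totalDegree_zero_iff_isHomogeneous, totalDegree_eq_zero_iff_eq_C] at hf₀
  rw [hf₀] at hf ⊢
  by_contra hne
  exact hI (Ideal.eq_top_of_isUnit_mem _ hf ((IsUnit.mk0 _ fun h => hne (by rw [h, C_0])).map C))

end HomogeneousIdeals

section HilbertSeries

theorem finrank_map_add_finrank_inf_ker {K V W : Type*} [Field K] [AddCommGroup V] [Module K V]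
    [AddCommGroup W] [Module K W] (f : V →ₗ[K] W) (U : Submodule K V) [Module.Finite K U] :
    Module.finrank K (U.map f) + Module.finrank K (U ⊓ LinearMap.ker f : Submodule K V) =
      Module.finrank K U := by
  rw [← LinearMap.finrank_range_add_finrank_ker (f.domRestrict U), LinearMap.range_domRestrict,
    LinearMap.ker_domRestrict, ← Submodule.map_comap_subtype, Submodule.finrank_map_subtype_eq]

variable {K : Type} [Field K] {r : ℕ} {I J : Ideal (PS K r)}

instance finite_homogeneousSubmodule (n : ℕ) :
    Module.Finite K (homogeneousSubmodule (Fin (r + 1)) K n) :=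
  Module.Finite.iff_fg.2 (homogeneousSubmodule_fg _ _ n)

instance finite_quotComponent (n : ℕ) : Module.Finite K (quotComponent K r J n) :=
  Module.Finite.iff_fg.2 ((homogeneousSubmodule_fg _ _ n).map _)

theorem finrank_homogeneousSubmodule (n : ℕ) :
    Module.finrank K (homogeneousSubmodule (Fin (r + 1)) K n) = (r + n).choose r := by
  have degree_eq : ({d | d.degree = n} : Set (Fin (r + 1) →₀ ℕ)) =
      ((Finset.finsuppAntidiag Finset.univ n : Finset (Fin (r + 1) →₀ ℕ)) : Set _) := by
    ext d
    simp [Finset.mem_finsuppAntidiag, Finsupp.degree_eq_sum]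
  rw [homogeneousSubmodule_eq_finsupp_supported, degree_eq,
    (AddMonoidAlgebra.supportedEquivFinsupp (R := K) (S := K) _).finrank_eq,
    Module.finrank_finsupp_self]
  simp only [Finset.coe_sort_coe, Fintype.card_coe]
  rw [Finset.card_finsuppAntidiag_nat_eq_choose, Finset.card_univ, Fintype.card_fin,
    show r + 1 + n - 1 = r + n by omega]
  exact Nat.choose_symm_of_eq_add (by omega)

theorem mem_quotComponent {n : ℕ} {x : PS K r ⧸ J} :
    x ∈ quotComponent K r J n ↔ ∃ f : PS K r, f.IsHomogeneous n ∧ Ideal.Quotient.mk J f = x := by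
  simp [quotComponent, Submodule.mem_map]

theorem mk_mem_quotComponent {n : ℕ} {f : PS K r} (hf : f.IsHomogeneous n) :
    Ideal.Quotient.mk J f ∈ quotComponent K r J n :=
  mem_quotComponent.2 ⟨f, hf, rfl⟩

theorem finrank_quotComponent_add (n : ℕ) :
    Module.finrank K (quotComponent K r J n) + Module.finrank K
      (homogeneousSubmodule (Fin (r + 1)) K n ⊓ J.restrictScalars K : Submodule K (PS K r)) =
    Module.finrank K (homogeneousSubmodule (Fin (r + 1)) K n) := by
  have ker_eq : J.restrictScalars K = LinearMap.ker (Ideal.Quotient.mkₐ K J).toLinearMap := by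
    ext x
    simp [Ideal.Quotient.eq_zero_iff_mem]
  rw [ker_eq]
  exact finrank_map_add_finrank_inf_ker _ (homogeneousSubmodule (Fin (r + 1)) K n)

theorem finrank_quotComponent_of_forall_eq_zero {n : ℕ}
    (h : ∀ f ∈ J, f.IsHomogeneous n → f = 0) :
    Module.finrank K (quotComponent K r J n) = (r + n).choose r := by
  have inf_eq : homogeneousSubmodule (Fin (r + 1)) K n ⊓ J.restrictScalars K = ⊥ :=
    eq_bot_iff.2 fun f hf => h f hf.2 hf.1
  rw [← finrank_homogeneousSubmodule (K := K), ← finrank_quotComponent_add (J := J), inf_eq,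
    finrank_bot, add_zero]

theorem finrank_quotComponent_eq_zero_iff {n : ℕ} :
    Module.finrank K (quotComponent K r J n) = 0 ↔ ∀ f : PS K r, f.IsHomogeneous n → f ∈ J := by
  simp only [Submodule.finrank_eq_zero, Submodule.eq_bot_iff, mem_quotComponent,
    forall_exists_index, and_imp, ← Ideal.Quotient.eq_zero_iff_mem]
  exact ⟨fun h f hf => h _ f hf rfl, fun h _ f hf hx => hx ▸ h f hf⟩

theorem map_factor_quotComponent (hle : I ≤ J) (n : ℕ) :
    (quotComponent K r I n).map (Ideal.Quotient.factorₐ K hle).toLinearMap =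
      quotComponent K r J n := by
  rw [quotComponent, ← Submodule.map_comp]
  rfl

theorem quotComponent_zero_inf_ker_factor (hJ : IsHomIdeal K r J) {l : PS K r}
    (hl : l.IsHomogeneous 1) :
    quotComponent K r J 0 ⊓ LinearMap.ker (Ideal.Quotient.factorₐ K
      (le_sup_left : J ≤ J ⊔ Ideal.span {l})).toLinearMap = ⊥ := by
  rw [eq_bot_iff]
  rintro x ⟨hx, hker⟩
  obtain ⟨f, hf, rfl⟩ := mem_quotComponent.1 hx
  exact Ideal.Quotient.eq_zero_iff_mem.2
    (hJ.mem_of_mem_sup_span (by simpa using hl) hf one_pos (Ideal.Quotient.eq_zero_iff_mem.1 hker))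

theorem quotComponent_succ_inf_ker_factor (hJ : IsHomIdeal K r J) {l : PS K r}
    (hl : l.IsHomogeneous 1) (n : ℕ) :
    quotComponent K r J (n + 1) ⊓ LinearMap.ker (Ideal.Quotient.factorₐ K
      (le_sup_left : J ≤ J ⊔ Ideal.span {l})).toLinearMap =
    (quotComponent K r J n).map (LinearMap.mulLeft K (Ideal.Quotient.mk J l)) := by
  apply le_antisymm
  · rintro x ⟨hx, hker⟩
    obtain ⟨f, hf, rfl⟩ := mem_quotComponent.1 hx
    obtain ⟨j, hj, g, hg, rfl⟩ :=
      hJ.exists_eq_add_mul hl hf (Ideal.Quotient.eq_zero_iff_mem.1 hker)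
    refine ⟨Ideal.Quotient.mk J g, mk_mem_quotComponent hg, ?_⟩
    rw [LinearMap.mulLeft_apply, map_add, Ideal.Quotient.eq_zero_iff_mem.2 hj, zero_add, map_mul,
      mul_comm]
  · rintro _ ⟨y, hy, rfl⟩
    obtain ⟨g, hg, rfl⟩ := mem_quotComponent.1 hy
    rw [LinearMap.mulLeft_apply, ← map_mul]
    refine ⟨mk_mem_quotComponent (mul_comm g l ▸ hg.mul hl), Ideal.Quotient.eq_zero_iff_mem.2 ?_⟩
    exact Ideal.mul_mem_right _ _ (Submodule.mem_sup_right (Ideal.mem_span_singleton_self l))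

theorem hilbSeries_sup_span_singleton (hJ : IsHomIdeal K r J) {l : PS K r}
    (hl : l.IsHomogeneous 1) (hreg : IsSMulRegular (PS K r ⧸ J) l) :
    hilbSeries K r (J ⊔ Ideal.span {l}) = hilbSeries K r J * (1 - PowerSeries.X) := by
  have hinj : Function.Injective (LinearMap.mulLeft K (Ideal.Quotient.mk J l)) := hreg
  have hdim (n : ℕ) := finrank_map_add_finrank_inf_ker (Ideal.Quotient.factorₐ K
    (le_sup_left : J ≤ J ⊔ Ideal.span {l})).toLinearMap (quotComponent K r J n)
  have hdim_zero := hdim 0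
  rw [map_factor_quotComponent, quotComponent_zero_inf_ker_factor hJ hl, finrank_bot,
    add_zero] at hdim_zero
  ext (_ | n) <;> rw [mul_sub, mul_one, map_sub]
  · simp [hilbSeries, hdim_zero]
  · have hdim_succ := hdim (n + 1)
    rw [map_factor_quotComponent, quotComponent_succ_inf_ker_factor hJ hl,
      ← (Submodule.equivMapOfInjective _ hinj (quotComponent K r J n)).finrank_eq] at hdim_succ
    simp [hilbSeries, PowerSeries.coeff_succ_mul_X, ← hdim_succ]

/-- `ls` consists of linear forms and is a regular sequence on `S ⧸ I`, for a homogeneous ideal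
`I`. Regularity is meant in the weak sense, so `S ⧸ (I + (ls))` may be zero. -/
structure IsLinearRegularSequence (I : Ideal (PS K r)) (ls : List (PS K r)) : Prop where
  isHomIdeal : IsHomIdeal K r I
  isHomogeneous : ∀ l ∈ ls, l.IsHomogeneous 1
  isWeaklyRegular : RingTheory.Sequence.IsWeaklyRegular (PS K r ⧸ I) ls

namespace IsLinearRegularSequence

variable {l : PS K r} {ls : List (PS K r)}

theorem cons_iff : IsLinearRegularSequence I (l :: ls) ↔ IsHomIdeal K r I ∧ l.IsHomogeneous 1 ∧
    IsSMulRegular (PS K r ⧸ I) l ∧ IsLinearRegularSequence (I ⊔ Ideal.span {l}) ls := by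
  constructor
  · rintro ⟨hI, hls, hreg⟩
    rw [List.forall_mem_cons] at hls
    rw [isWeaklyRegular_quotient_cons_iff] at hreg
    exact ⟨hI, hls.1, hreg.1, hI.sup (isHomIdeal_span (by simpa using ⟨1, hls.1⟩)), hls.2, hreg.2⟩
  · rintro ⟨hI, hl, hreg, h⟩
    exact ⟨hI, List.forall_mem_cons.2 ⟨hl, h.isHomogeneous⟩,
      isWeaklyRegular_quotient_cons_iff.2 ⟨hreg, h.isWeaklyRegular⟩⟩

theorem isHomIdeal_sup (h : IsLinearRegularSequence I ls) :
    IsHomIdeal K r (I ⊔ Ideal.ofList ls) :=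
  h.isHomIdeal.sup (isHomIdeal_span fun l hl => ⟨1, h.isHomogeneous l hl⟩)

theorem hilbSeries_sup_ofList (h : IsLinearRegularSequence I ls) :
    hilbSeries K r (I ⊔ Ideal.ofList ls) =
      hilbSeries K r I * (1 - PowerSeries.X) ^ ls.length := by
  induction ls generalizing I with
  | nil => simp
  | cons l ls ih =>
    obtain ⟨hI, hl, hreg, htail⟩ := cons_iff.1 h
    rw [Ideal.ofList_cons, ← sup_assoc, ih htail, hilbSeries_sup_span_singleton hI hl hreg,
      List.length_cons, pow_succ', mul_assoc]

end IsLinearRegularSequence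

end HilbertSeries

section HVector

theorem polynomial_eq_one_of_eval_one_eq_one {g : Polynomial ℤ} (nonneg : ∀ n, 0 ≤ g.coeff n)
    (no_gap : ∀ n, g.coeff n = 0 → g.coeff (n + 1) = 0) (heval : g.eval 1 = 1) : g = 1 := by
  have coeff_zero_ne : g.coeff 0 ≠ 0 := by
    intro h₀
    have coeff_eq_zero (n : ℕ) : g.coeff n = 0 := by
      induction n with
      | zero => exact h₀
      | succ n ih => exact no_gap n ih
    rw [Polynomial.ext (q := 0) coeff_eq_zero, Polynomial.eval_zero] at heval
    exact zero_ne_one heval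
  have sum_nonneg := Finset.sum_nonneg fun i (_ : i ∈ Finset.range g.natDegree) => nonneg (i + 1)
  rw [Polynomial.eval_eq_sum_range] at heval
  simp only [one_pow, mul_one, Finset.sum_range_succ'] at heval
  have hnonneg₀ := nonneg 0
  have sum_eq_zero : ∑ i ∈ Finset.range g.natDegree, g.coeff (i + 1) = 0 := by omega
  ext (_ | n)
  · simp only [Polynomial.coeff_one_zero]
    omega
  · rw [Polynomial.coeff_one, if_neg n.succ_ne_zero]
    by_cases hn : n < g.natDegree
    · exact (Finset.sum_eq_zero_iff_of_nonneg fun i _ => nonneg (i + 1)).1 sum_eq_zero n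
        (Finset.mem_range.2 hn)
    · exact Polynomial.coeff_eq_zero_of_natDegree_lt (by omega)

theorem polynomial_eq_add_X_sq_of_eval_one {h : Polynomial ℤ} (nonneg : ∀ n, 0 ≤ h.coeff n)
    (no_gap : ∀ n, h.coeff n = 0 → h.coeff (n + 1) = 0)
    (heval : h.eval 1 = h.coeff 0 + h.coeff 1 + 1) :
    h = Polynomial.C (h.coeff 0) + Polynomial.C (h.coeff 1) * Polynomial.X +
      Polynomial.X ^ 2 := by
  have expand : h = (h.divX.divX * Polynomial.X + Polynomial.C (h.coeff 1)) * Polynomial.X +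
      Polynomial.C (h.coeff 0) := by
    conv_lhs => rw [← h.divX_mul_X_add, ← h.divX.divX_mul_X_add, Polynomial.coeff_divX]
  have divX_eq : h.divX.divX = 1 := by
    refine polynomial_eq_one_of_eval_one_eq_one (fun n => ?_) (fun n => ?_) ?_
    · simpa only [Polynomial.coeff_divX] using nonneg _
    · simpa only [Polynomial.coeff_divX] using no_gap _
    · have := congrArg (Polynomial.eval 1) expand
      simp only [Polynomial.eval_add, Polynomial.eval_mul, Polynomial.eval_X,
        Polynomial.eval_C] at this
      omega
  conv_lhs => rw [expand, divX_eq]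
  ring

variable {K : Type} [Field K] {r : ℕ} {I J : Ideal (PS K r)}

theorem finrank_quotComponent_zero (hI : I ≠ ⊤) :
    Module.finrank K (quotComponent K r I 0) = 1 := by
  simpa using finrank_quotComponent_of_forall_eq_zero
    fun f hf hf₀ => eq_zero_of_mem_of_isHomogeneous_zero hI hf hf₀

theorem Nondeg.finrank_quotComponent_one (hI : Nondeg K r I) :
    Module.finrank K (quotComponent K r I 1) = r + 1 := by
  simpa using finrank_quotComponent_of_forall_eq_zero hI

theorem hilbSeries_eq_add_X_sq {h : Polynomial ℤ} (hJ : hilbSeries K r J = h)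
    (heval : h.eval 1 = h.coeff 0 + h.coeff 1 + 1) :
    hilbSeries K r J = PowerSeries.C (h.coeff 0) + PowerSeries.C (h.coeff 1) * PowerSeries.X +
      PowerSeries.X ^ 2 := by
  have coeff_eq (n : ℕ) : h.coeff n = (Module.finrank K (quotComponent K r J n) : ℤ) := by
    simpa [hilbSeries] using (congrArg (PowerSeries.coeff n) hJ).symm
  have no_gap (n : ℕ) (hn : h.coeff n = 0) : h.coeff (n + 1) = 0 := by
    rw [coeff_eq, Nat.cast_eq_zero, finrank_quotComponent_eq_zero_iff] at hn ⊢
    exact fun f hf => mem_of_isHomogeneous_of_le hn n.le_succ hf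
  rw [hJ]
  conv_lhs => rw [polynomial_eq_add_X_sq_of_eval_one (fun n => coeff_eq n ▸ Int.natCast_nonneg _)
    no_gap heval]
  simp only [Polynomial.coe_add, Polynomial.coe_mul, Polynomial.coe_C, Polynomial.coe_pow,
    Polynomial.coe_X]

/-- A *quintic reduction* of the graded ring `S ⧸ I`: a regular sequence `ls` of linear forms whose
Artinian reduction `S ⧸ (I + (ls))` has `h`-vector `(1, 3, 1)`, as happens for arithmetically
Cohen–Macaulay varieties of degree five and codimension three. -/
structure IsQuinticReduction (I : Ideal (PS K r)) (ls : List (PS K r)) : Prop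
    extends IsLinearRegularSequence I ls where
  hilbSeries_eq : hilbSeries K r (I ⊔ Ideal.ofList ls) =
    1 + 3 * PowerSeries.X + PowerSeries.X ^ 2

theorem exists_isQuinticReduction [Infinite K] {d : ℕ} (htop : I ≠ ⊤) (hhom : IsHomIdeal K r I)
    (hnd : Nondeg K r I) (hdim : DimEq K r I d) (hcodim : d + 3 = r) (hdeg : DegreeEq K r I d 5)
    (hACM : IsACM K r I) : ∃ ls, ls.length = d + 1 ∧ IsQuinticReduction I ls := by
  obtain ⟨t, ht, hdepth⟩ := hACM
  obtain rfl : t = d + 1 := by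
    rw [hdim] at ht
    exact_mod_cast ht.symm
  obtain ⟨ls, hlen, hls, hreg⟩ := hdepth.exists_linear_isWeaklyRegular
  have hlin : IsLinearRegularSequence I ls := ⟨hhom, hls, hreg⟩
  obtain ⟨h, hh, heval⟩ := hdeg
  have hilb_eq : hilbSeries K r (I ⊔ Ideal.ofList ls) = h := by
    rw [hlin.hilbSeries_sup_ofList, hlen, hh]
    rfl
  have coeff_zero : h.coeff 0 = 1 := by
    have := congrArg (PowerSeries.coeff 0) hh
    simpa [hilbSeries, finrank_quotComponent_zero htop] using this.symm
  have coeff_one : h.coeff 1 = 3 := by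
    have := congrArg (PowerSeries.coeff 1) hh
    simp [PowerSeries.coeff_one_mul, PowerSeries.coeff_one_pow, hilbSeries,
      hnd.finrank_quotComponent_one, finrank_quotComponent_zero htop, PowerSeries.coeff_one] at this
    omega
  refine ⟨ls, hlen, hlin, ?_⟩
  rw [hilbSeries_eq_add_X_sq hilb_eq (by rw [heval, coeff_zero, coeff_one]; norm_num), coeff_zero,
    coeff_one, map_one, map_ofNat]

namespace IsQuinticReduction

variable {ls : List (PS K r)} (h : IsQuinticReduction I ls)
include h

theorem finrank_quotComponent (n : ℕ) :
    (Module.finrank K (quotComponent K r (I ⊔ Ideal.ofList ls) n) : ℤ) =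
      (1 + 3 * Polynomial.X + Polynomial.X ^ 2 : Polynomial ℤ).coeff n := by
  have := congrArg (PowerSeries.coeff n) h.hilbSeries_eq
  rw [hilbSeries, PowerSeries.coeff_mk] at this
  have coe_three : ((3 : Polynomial ℤ) : PowerSeries ℤ) = 3 :=
    map_ofNat Polynomial.coeToPowerSeries.ringHom 3
  rw [this, ← Polynomial.coeff_coe, Polynomial.coe_add, Polynomial.coe_add, Polynomial.coe_mul,
    Polynomial.coe_one, Polynomial.coe_pow, Polynomial.coe_X, coe_three]

theorem finrank_quotComponent_zero :
    Module.finrank K (quotComponent K r (I ⊔ Ideal.ofList ls) 0) = 1 := by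
  simpa using h.finrank_quotComponent 0

theorem finrank_quotComponent_one :
    Module.finrank K (quotComponent K r (I ⊔ Ideal.ofList ls) 1) = 3 := by
  have := h.finrank_quotComponent 1
  simp [Polynomial.coeff_one, Polynomial.coeff_X] at this
  omega

theorem finrank_quotComponent_two :
    Module.finrank K (quotComponent K r (I ⊔ Ideal.ofList ls) 2) = 1 := by
  simpa [Polynomial.coeff_one, Polynomial.coeff_X] using h.finrank_quotComponent 2

theorem mem_sup_of_three_le {n : ℕ} (hn : 3 ≤ n) {f : PS K r} (hf : f.IsHomogeneous n) :
    f ∈ I ⊔ Ideal.ofList ls := by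
  refine mem_of_isHomogeneous_of_le (finrank_quotComponent_eq_zero_iff.1 ?_) hn hf
  have := h.finrank_quotComponent 3
  simpa [Polynomial.coeff_one, Polynomial.coeff_X] using this

end IsQuinticReduction

end HVector

section FreenessOverParameters

open RingTheory.Sequence

theorem forall_eq_zero_of_isSMulRegular {R S ι : Type*} [CommRing R] [CommRing S] [Fintype ι]
    {J : Ideal S} {φ : R →+* S} {l : S} {b : ι → S} (hl : IsSMulRegular (S ⧸ J) l)
    (hb : ∀ c : ι → R, ∑ i, φ (c i) * b i ∈ J ⊔ Ideal.span {l} → c = 0)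
    {p : ι → Polynomial R} (hp : ∑ i, (p i).eval₂ φ l * b i ∈ J) : p = 0 := by
  rw [isSMulRegular_quotient_iff_mem_of_smul_mem] at hl
  have coeff_zero_and_divX (p : ι → Polynomial R) (hp : ∑ i, (p i).eval₂ φ l * b i ∈ J) :
      (fun i => (p i).coeff 0) = 0 ∧ ∑ i, (p i).divX.eval₂ φ l * b i ∈ J := by
    have expand : ∑ i, (p i).eval₂ φ l * b i =
        ∑ i, φ ((p i).coeff 0) * b i + l * ∑ i, (p i).divX.eval₂ φ l * b i := by
      rw [Finset.mul_sum, ← Finset.sum_add_distrib]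
      refine Finset.sum_congr rfl fun i _ => ?_
      conv_lhs => rw [← (p i).divX_mul_X_add, Polynomial.eval₂_add, Polynomial.eval₂_mul_X,
        Polynomial.eval₂_C]
      ring
    have coeff_zero : (fun i => (p i).coeff 0) = 0 := by
      refine hb _ (Submodule.mem_sup.2 ⟨_, hp, _, Ideal.neg_mem_iff _ |>.2
        (Ideal.mul_mem_right (∑ i, (p i).divX.eval₂ φ l * b i) _
          (Ideal.mem_span_singleton_self l)), ?_⟩)
      rw [expand, add_neg_cancel_right]
    refine ⟨coeff_zero, hl _ ?_⟩
    simpa [expand, funext_iff.1 coeff_zero] using hp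
  have coeff_eq_zero (n : ℕ) (p : ι → Polynomial R) (hp : ∑ i, (p i).eval₂ φ l * b i ∈ J) (i : ι) :
      (p i).coeff n = 0 := by
    induction n generalizing p with
    | zero => exact congrFun (coeff_zero_and_divX p hp).1 i
    | succ n ih => simpa using ih (fun i => (p i).divX) (coeff_zero_and_divX p hp).2
  exact funext fun i => Polynomial.ext fun n => coeff_eq_zero n p hp i

theorem aeval_get_cons {K S : Type*} [CommRing K] [CommRing S] [Algebra K S] (x : S) (xs : List S)
    (p : MvPolynomial (Fin (x :: xs).length) K) :
    aeval (x :: xs).get p =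
      (finSuccEquiv K xs.length p).eval₂ (aeval xs.get : _ →ₐ[K] S).toRingHom x := by
  induction p using MvPolynomial.induction_on with
  | C a => simp [finSuccEquiv_apply]
  | add p q hp hq => simp [hp, hq]
  | mul_X p i hp =>
    rw [map_mul, hp, map_mul, Polynomial.eval₂_mul]
    congr 1
    induction i using Fin.cases <;> simp [finSuccEquiv_X_zero, finSuccEquiv_X_succ]

theorem forall_eq_zero_of_isWeaklyRegular {K S ι : Type*} [CommRing K] [CommRing S] [Algebra K S]
    [Fintype ι] {J : Ideal S} {ls : List S} {b : ι → S} (hls : IsWeaklyRegular (S ⧸ J) ls)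
    (hb : ∀ c : ι → K, ∑ i, algebraMap K S (c i) * b i ∈ J ⊔ Ideal.ofList ls → c = 0)
    {p : ι → MvPolynomial (Fin ls.length) K} (hp : ∑ i, aeval ls.get (p i) * b i ∈ J) :
    p = 0 := by
  induction ls generalizing J with
  | nil =>
    have p_eq (i : ι) : p i = C ((isEmptyAlgEquiv K (Fin 0)) (p i)) :=
      ((isEmptyAlgEquiv K (Fin 0)).symm_apply_apply (p i)).symm
    have := hb (fun i => isEmptyAlgEquiv K (Fin 0) (p i)) <| by
      simpa only [Ideal.ofList_nil, sup_bot_eq, ← aeval_C ([] : List S).get, ← p_eq] using hp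
    funext i
    rw [p_eq i, congrFun this i, Pi.zero_apply, C_0, Pi.zero_apply]
  | cons x xs ih =>
    rw [isWeaklyRegular_quotient_cons_iff] at hls
    have := forall_eq_zero_of_isSMulRegular hls.1 (φ := (aeval xs.get : _ →ₐ[K] S).toRingHom)
      (p := fun i => finSuccEquiv K xs.length (p i))
      (fun c hc => ih hls.2 (by rwa [sup_assoc, ← Ideal.ofList_cons]) hc)
      (by simpa only [aeval_get_cons] using hp)
    exact funext fun i => (finSuccEquiv K xs.length).map_eq_zero_iff.1 (congrFun this i)

end FreenessOverParameters

section HomogeneousBases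

variable {K : Type} [Field K] {r : ℕ} {I J : Ideal (PS K r)} {ι : Type} [Fintype ι]
  {b : ι → PS K r} {deg : ι → ℕ}

/-- The residue classes of the forms `b i`, of degree `deg i`, are a `K`-basis of `S ⧸ J`. Spanning
is required degree by degree. -/
structure IsHomogeneousBasisMod (J : Ideal (PS K r)) (b : ι → PS K r) (deg : ι → ℕ) : Prop where
  isHomogeneous : ∀ i, (b i).IsHomogeneous (deg i)
  eq_zero : ∀ c : ι → K, ∑ i, C (c i) * b i ∈ J → c = 0
  exists_sub_mem : ∀ n (f : PS K r), f.IsHomogeneous n →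
    ∃ c : ι → K, (∀ i, deg i ≠ n → c i = 0) ∧ f - ∑ i, C (c i) * b i ∈ J

theorem isHomogeneousBasisMod_of_finrank (hb : ∀ i, (b i).IsHomogeneous (deg i))
    (eq_zero : ∀ c : ι → K, ∑ i, C (c i) * b i ∈ J → c = 0)
    (finrank_eq : ∀ n, Module.finrank K (quotComponent K r J n) =
      Fintype.card {i // deg i = n}) : IsHomogeneousBasisMod J b deg := by
  refine ⟨hb, eq_zero, fun n f hf => ?_⟩
  have mk_sum (c : ι → K) : ∑ i, c i • Ideal.Quotient.mk J (b i) =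
      Ideal.Quotient.mk J (∑ i, C (c i) * b i) := by
    simp only [map_sum, ← smul_eq_C_mul]
    rfl
  have linearIndependent : LinearIndependent K fun i => Ideal.Quotient.mk J (b i) :=
    Fintype.linearIndependent_iff.2 fun c hc => congrFun <| eq_zero c <| by
      rwa [mk_sum, Ideal.Quotient.eq_zero_iff_mem] at hc
  have span_eq : Submodule.span K ((fun i => Ideal.Quotient.mk J (b i)) '' {i | deg i = n}) =
      quotComponent K r J n := by
    refine Submodule.eq_of_le_of_finrank_eq (Submodule.span_le.2 ?_) ?_
    · rintro _ ⟨i, rfl, rfl⟩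
      exact mk_mem_quotComponent (hb i)
    · rw [Set.image_eq_range, finrank_eq]
      exact finrank_span_eq_card (linearIndependent.comp _ Subtype.val_injective)
  have hf_mem := mk_mem_quotComponent (J := J) hf
  rw [← span_eq, Finsupp.mem_span_image_iff_linearCombination] at hf_mem
  obtain ⟨c, hc, hcf⟩ := hf_mem
  refine ⟨c, fun i hi => (Finsupp.mem_supported' K c).1 hc i hi, ?_⟩
  rw [← Ideal.Quotient.mk_eq_mk_iff_sub_mem, ← hcf, ← mk_sum, Finsupp.linearCombination_apply,
    Finsupp.sum_fintype _ _ (by simp)]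

theorem aeval_get_sub_C_constantCoeff_mem {ls : List (PS K r)}
    (p : MvPolynomial (Fin ls.length) K) :
    aeval ls.get p - C (constantCoeff p) ∈ Ideal.ofList ls := by
  induction p using MvPolynomial.induction_on with
  | C a => simp
  | add p q hp hq =>
    rw [map_add, map_add, C_add, add_sub_add_comm]
    exact Ideal.add_mem _ hp hq
  | mul_X p i _ =>
    rw [map_mul, map_mul, constantCoeff_X, mul_zero, C_0, sub_zero, aeval_X]
    exact Ideal.mul_mem_left _ _ (Ideal.subset_span (List.getElem_mem i.2))

theorem IsHomogeneousBasisMod.exists_isHomogeneous_sub (hb : IsHomogeneousBasisMod J b deg) {n : ℕ}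
    {f : PS K r} (hf : f.IsHomogeneous n) :
    ∃ c : ι → K, (∀ i, deg i ≠ n → c i = 0) ∧ (f - ∑ i, C (c i) * b i).IsHomogeneous n ∧
      f - ∑ i, C (c i) * b i ∈ J := by
  obtain ⟨c, hc, hcf⟩ := hb.exists_sub_mem n f hf
  refine ⟨c, hc, hf.sub (IsHomogeneous.sum _ _ _ fun i _ => ?_), hcf⟩
  by_cases hi : deg i = n
  · exact hi ▸ (hb.isHomogeneous i).C_mul (c i)
  · simp [hc i hi, isHomogeneous_zero]

variable {ls : List (PS K r)}

theorem IsHomogeneousBasisMod.constantCoeff_eq_zero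
    (hb : IsHomogeneousBasisMod (J ⊔ Ideal.ofList ls) b deg)
    {p : ι → MvPolynomial (Fin ls.length) K}
    (hp : ∑ i, aeval ls.get (p i) * b i ∈ J ⊔ Ideal.ofList ls) (i : ι) :
    constantCoeff (p i) = 0 := by
  refine congrFun (hb.eq_zero (fun i => constantCoeff (p i)) ?_) i
  rw [← Submodule.sub_mem_iff_right _ hp, ← Finset.sum_sub_distrib]
  simp only [← sub_mul]
  exact Ideal.sum_mem _ fun i _ => Ideal.mul_mem_right _ _
    (Submodule.mem_sup_right (aeval_get_sub_C_constantCoeff_mem (p i)))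

namespace IsLinearRegularSequence

theorem exists_eq_add_sum_get_mul (h : IsLinearRegularSequence I ls) {f : PS K r} {n : ℕ}
    (hf : f.IsHomogeneous (n + 1)) (hmem : f ∈ I ⊔ Ideal.ofList ls) :
    ∃ j ∈ I, ∃ g : Fin ls.length → PS K r,
      (∀ k, (g k).IsHomogeneous n) ∧ f = j + ∑ k, g k * ls.get k := by
  refine h.isHomIdeal.exists_eq_add_sum_mul (fun k => h.isHomogeneous _ (ls.get_mem k)) hf ?_
  rwa [Set.range_list_get]

theorem exists_homogeneous_repr (h : IsLinearRegularSequence I ls)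
    (hb : IsHomogeneousBasisMod (I ⊔ Ideal.ofList ls) b deg) {n : ℕ} {f : PS K r}
    (hf : f.IsHomogeneous n) :
    ∃ p : ι → MvPolynomial (Fin ls.length) K, (∀ i m, m + deg i = n → (p i).IsHomogeneous m) ∧
      (∀ i, n < deg i → p i = 0) ∧ f - ∑ i, aeval ls.get (p i) * b i ∈ I := by
  induction n generalizing f with
  | zero =>
    obtain ⟨c, hc, hfc, hcf⟩ := hb.exists_isHomogeneous_sub hf
    refine ⟨fun i => C (c i), fun i m hm => ?_, fun i hi => by simp [hc i hi.ne'], ?_⟩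
    · obtain ⟨rfl, -⟩ := Nat.add_eq_zero_iff.1 hm
      exact isHomogeneous_C _ _
    · simp only [algHom_C, algebraMap_eq]
      exact h.isHomIdeal.mem_of_mem_sup_span h.isHomogeneous hfc one_pos hcf
  | succ n ih =>
    obtain ⟨c, hc, hfc, hcf⟩ := hb.exists_isHomogeneous_sub hf
    obtain ⟨j, hj, g, hg, hfg⟩ := h.exists_eq_add_sum_get_mul hfc hcf
    choose p hp_hom hp_zero hp_mem using fun k => ih (hg k)
    refine ⟨fun i => C (c i) + ∑ k, p k i * X k, fun i m hm => ?_, fun i hi => ?_, ?_⟩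
    · obtain _ | m := m
      · have hp (k) : p k i = 0 := hp_zero k i (by omega)
        simp [hp, isHomogeneous_C]
      · simp only [hc i (by omega), C_0, zero_add]
        exact IsHomogeneous.sum _ _ _ fun k _ =>
          (hp_hom k i m (by omega)).mul (isHomogeneous_X K k)
    · have hp (k) : p k i = 0 := hp_zero k i (by omega)
      simp [hp, hc i (by omega)]
    · have expand : f - ∑ i, aeval ls.get (C (c i) + ∑ k, p k i * X k) * b i =
          j + ∑ k, (g k - ∑ i, aeval ls.get (p k i) * b i) * ls.get k := by
        simp only [map_add, map_sum, map_mul, aeval_X, algHom_C, algebraMap_eq, add_mul, sub_mul,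
          Finset.sum_add_distrib, Finset.sum_sub_distrib, Finset.sum_mul]
        rw [Finset.sum_comm (s := Finset.univ (α := ι))]
        simp only [mul_right_comm _ _ (b _)]
        linear_combination hfg
      rw [expand]
      exact I.add_mem hj (Ideal.sum_mem _ fun k _ => I.mul_mem_right _ (hp_mem k))

end IsLinearRegularSequence

end HomogeneousBases

section NondegeneratePairing

/-- The characteristic matrix `M - M i₀ i₀` is singular, so `y - φ (M i₀ i₀)` kills a nonzero
combination of the `e i`. -/
theorem eq_of_forall_mul_eq_sum {R A ι : Type*} [CommRing R] [IsDomain R] [CommRing A] [IsDomain A]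
    [Fintype ι] (φ : R →+* A) {e : ι → A} (he : ∀ p : ι → R, ∑ i, φ (p i) * e i = 0 → p = 0)
    {y : A} {M : Matrix ι ι R} (hM : ∀ j, y * e j = ∑ i, φ (M j i) * e i) {i₀ : ι}
    (hi₀ : ∀ j ≠ i₀, M j i₀ = 0) : y = φ (M i₀ i₀) := by
  classical
  obtain ⟨v, hv_ne, hv⟩ : ∃ v ≠ 0, Matrix.vecMul v (M - Matrix.scalar ι (M i₀ i₀)) = 0 := by
    refine Matrix.exists_vecMul_eq_zero_iff.2 (Matrix.det_eq_zero_of_column_eq_zero i₀ fun j => ?_)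
    obtain rfl | hj := eq_or_ne j i₀
    · simp
    · simp [hi₀ j hj, hj]
  rw [Matrix.vecMul_sub, sub_eq_zero, Matrix.scalar_apply, Matrix.vecMul_diagonal_const] at hv
  have annihilates : (y - φ (M i₀ i₀)) * ∑ j, φ (v j) * e j = 0 := by
    rw [sub_mul, sub_eq_zero, Finset.mul_sum, Finset.mul_sum]
    calc ∑ j, y * (φ (v j) * e j) = ∑ j, ∑ i, φ (v j) * (φ (M j i) * e i) :=
          Finset.sum_congr rfl fun j _ => by rw [mul_left_comm, hM, Finset.mul_sum]
      _ = ∑ i, φ (Matrix.vecMul v M i) * e i := by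
          rw [Finset.sum_comm]
          refine Finset.sum_congr rfl fun i _ => ?_
          rw [Matrix.vecMul, dotProduct, map_sum, Finset.sum_mul]
          exact Finset.sum_congr rfl fun j _ => by rw [map_mul, mul_assoc]
      _ = ∑ i, φ (M i₀ i₀) * (φ (v i) * e i) :=
          Finset.sum_congr rfl fun i _ => by
            rw [hv]
            simp [mul_assoc, mul_left_comm]
  exact sub_eq_zero.1 ((mul_eq_zero.1 annihilates).resolve_right fun h => hv_ne (he v h))

variable {K : Type} [Field K] {r : ℕ} {I : Ideal (PS K r)} {ls : List (PS K r)}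

theorem IsLinearRegularSequence.mem_sup_of_sub_aeval_mem (h : IsLinearRegularSequence I ls)
    {y : PS K r} (hy : y.IsHomogeneous 1) {c : MvPolynomial (Fin ls.length) K}
    (hc : y - aeval ls.get c ∈ I) : y ∈ I ⊔ Ideal.ofList ls := by
  have hmem : y - C (constantCoeff c) ∈ I ⊔ Ideal.ofList ls := by
    rw [← sub_add_sub_cancel _ (aeval ls.get c)]
    exact Ideal.add_mem _ (Submodule.mem_sup_left hc)
      (Submodule.mem_sup_right (aeval_get_sub_C_constantCoeff_mem c))
  have component_one := h.isHomIdeal_sup _ hmem 1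
  rwa [map_sub, homogeneousComponent_eq_self hy, homogeneousComponent_of_mem (isHomogeneous_C _ _),
    if_neg one_ne_zero, sub_zero] at component_one

variable {ι : Type} [Fintype ι] {b : ι → PS K r} {deg : ι → ℕ}

theorem IsHomogeneousBasisMod.eq_zero_of_isHomogeneous_zero
    (hb : IsHomogeneousBasisMod (I ⊔ Ideal.ofList ls) b deg)
    {p : ι → MvPolynomial (Fin ls.length) K}
    (hp : ∑ i, aeval ls.get (p i) * b i ∈ I ⊔ Ideal.ofList ls) {i : ι}
    (hpi : (p i).IsHomogeneous 0) : p i = 0 := by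
  rw [← totalDegree_zero_iff_isHomogeneous, totalDegree_eq_zero_iff_eq_C, ← constantCoeff_eq,
    hb.constantCoeff_eq_zero hp, C_0] at hpi
  exact hpi

/-- If `y` paired trivially with all forms of complementary degree, then the top coordinate of
`y * b j` would vanish for every `j` below the top. -/
theorem IsLinearRegularSequence.mem_sup_of_forall_mul_mem [I.IsPrime]
    (h : IsLinearRegularSequence I ls)
    (hb : IsHomogeneousBasisMod (I ⊔ Ideal.ofList ls) b deg) {i₀ : ι}
    (hlt : ∀ j ≠ i₀, deg j < deg i₀) {y : PS K r} (hy : y.IsHomogeneous 1)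
    (hmul : ∀ j, deg j + 1 = deg i₀ → y * b j ∈ I ⊔ Ideal.ofList ls) :
    y ∈ I ⊔ Ideal.ofList ls := by
  set φ : MvPolynomial (Fin ls.length) K →+* PS K r ⧸ I :=
    (Ideal.Quotient.mk I).comp (aeval ls.get : _ →ₐ[K] PS K r).toRingHom with hφ
  have mk_sum (p : ι → MvPolynomial (Fin ls.length) K) :
      ∑ i, φ (p i) * Ideal.Quotient.mk I (b i) =
        Ideal.Quotient.mk I (∑ i, aeval ls.get (p i) * b i) := by
    simp [hφ]
  choose M hM_hom hM_zero hM using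
    fun j => h.exists_homogeneous_repr hb (hy.mul (hb.isHomogeneous j))
  have top_coord_eq_zero (j : ι) (hj : j ≠ i₀) : M j i₀ = 0 := by
    rcases (Nat.succ_le_of_lt (hlt j hj)).lt_or_eq with hlt | heq
    · exact hM_zero j i₀ (by omega)
    · exact hb.eq_zero_of_isHomogeneous_zero ((Submodule.sub_mem_iff_right _ (hmul j heq)).1
        (Submodule.mem_sup_left (hM j))) (hM_hom j i₀ 0 (by omega))
  have hy_eq : Ideal.Quotient.mk I y = φ (M i₀ i₀) := by
    refine eq_of_forall_mul_eq_sum φ (e := fun i => Ideal.Quotient.mk I (b i)) (M := M)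
      (fun p hp => ?_) (fun j => ?_) top_coord_eq_zero
    · rw [mk_sum, Ideal.Quotient.eq_zero_iff_mem] at hp
      exact forall_eq_zero_of_isWeaklyRegular h.isWeaklyRegular hb.eq_zero hp
    · rw [mk_sum, ← map_mul, Ideal.Quotient.mk_eq_mk_iff_sub_mem]
      exact hM j
  exact h.mem_sup_of_sub_aeval_mem hy ((Ideal.Quotient.mk_eq_mk_iff_sub_mem _ _).1 hy_eq)

theorem IsHomIdeal.sum_ite_mem {J : Ideal (PS K r)} (hJ : IsHomIdeal K r J)
    (hb : ∀ i, (b i).IsHomogeneous (deg i)) {c : ι → K} (hc : ∑ i, C (c i) * b i ∈ J) (n : ℕ) :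
    ∑ i, (if deg i = n then C (c i) * b i else 0) ∈ J := by
  convert hJ _ hc n using 1
  rw [map_sum]
  refine Finset.sum_congr rfl fun i _ => ?_
  rw [homogeneousComponent_of_mem ((hb i).C_mul (c i))]
  simp only [eq_comm]

namespace IsQuinticReduction

theorem exists_linear_independent (h : IsQuinticReduction I ls) :
    ∃ y : Fin 3 → PS K r, (∀ k, (y k).IsHomogeneous 1) ∧
      ∀ c : Fin 3 → K, ∑ k, C (c k) * y k ∈ I ⊔ Ideal.ofList ls → c = 0 := by
  let B := Module.finBasisOfFinrankEq K _ h.finrank_quotComponent_one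
  choose y hy_hom hy using fun k => mem_quotComponent.1 (B k).2
  refine ⟨y, hy_hom, fun c hc => ?_⟩
  have relation : ∑ k, c k • B k = 0 := by
    rw [← Ideal.Quotient.eq_zero_iff_mem, map_sum] at hc
    refine Subtype.ext ?_
    rw [Submodule.coe_sum, Submodule.coe_zero, ← hc]
    refine Finset.sum_congr rfl fun k _ => ?_
    rw [Submodule.coe_smul, ← hy, ← smul_eq_C_mul]
    rfl
  exact funext (Fintype.linearIndependent_iff.1 B.linearIndependent c relation)

theorem exists_quadric_notMem (h : IsQuinticReduction I ls) :
    ∃ w : PS K r, w.IsHomogeneous 2 ∧ w ∉ I ⊔ Ideal.ofList ls := by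
  by_contra! hmem
  exact one_ne_zero (h.finrank_quotComponent_two.symm.trans
    (finrank_quotComponent_eq_zero_iff.2 hmem))

theorem isHomogeneousBasisMod (h : IsQuinticReduction I ls) {y : Fin 3 → PS K r} {w : PS K r}
    (hy : ∀ k, (y k).IsHomogeneous 1)
    (hy_indep : ∀ c : Fin 3 → K, ∑ k, C (c k) * y k ∈ I ⊔ Ideal.ofList ls → c = 0)
    (hw : w.IsHomogeneous 2) (hw_notMem : w ∉ I ⊔ Ideal.ofList ls) :
    IsHomogeneousBasisMod (I ⊔ Ideal.ofList ls) ![1, y 0, y 1, y 2, w] ![0, 1, 1, 1, 2] := by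
  have hb : ∀ i, (![1, y 0, y 1, y 2, w] i).IsHomogeneous (![0, 1, 1, 1, 2] i) := by
    simp [Fin.forall_fin_succ, hy, hw, isHomogeneous_one]
  refine isHomogeneousBasisMod_of_finrank hb (fun c hc => ?_) fun n => ?_
  · have eq_zero_of_C_mul_mem {a : K} (ha : C a * w ∈ I ⊔ Ideal.ofList ls) : a = 0 := by
      by_contra hne
      exact hw_notMem ((Ideal.unit_mul_mem_iff_mem _
        ((isUnit_iff_ne_zero.2 hne).map (C (σ := Fin (r + 1))))).1 ha)
    have part := h.isHomIdeal_sup.sum_ite_mem hb hc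
    have part_zero : C (c 0) ∈ I ⊔ Ideal.ofList ls := by simpa [Fin.sum_univ_succ] using part 0
    have part_two : C (c 4) * w ∈ I ⊔ Ideal.ofList ls := by
      simpa [Fin.sum_univ_succ] using part 2
    have hc_one := hy_indep ![c 1, c 2, c 3] (by simpa [Fin.sum_univ_succ] using part 1)
    ext i
    fin_cases i
    · exact eq_zero_of_C_mul_mem (Ideal.mul_mem_right w _ part_zero)
    · exact congrFun hc_one 0
    · exact congrFun hc_one 1
    · exact congrFun hc_one 2
    · exact eq_zero_of_C_mul_mem part_two
  · match n with
    | 0 => rw [h.finrank_quotComponent_zero]; rfl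
    | 1 => rw [h.finrank_quotComponent_one]; rfl
    | 2 => rw [h.finrank_quotComponent_two]; rfl
    | n + 3 =>
      rw [finrank_quotComponent_eq_zero_iff.2 fun f hf => h.mem_sup_of_three_le (by omega) hf]
      simp [isEmpty_subtype, Fin.forall_fin_succ]

theorem mem_sup_of_forall_mul_mem [I.IsPrime] (h : IsQuinticReduction I ls) {y : PS K r}
    (hy : y.IsHomogeneous 1)
    (hmul : ∀ z : PS K r, z.IsHomogeneous 1 → y * z ∈ I ⊔ Ideal.ofList ls) :
    y ∈ I ⊔ Ideal.ofList ls := by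
  obtain ⟨x, hx_hom, hx⟩ := h.exists_linear_independent
  obtain ⟨w, hw_hom, hw⟩ := h.exists_quadric_notMem
  refine h.toIsLinearRegularSequence.mem_sup_of_forall_mul_mem
    (h.isHomogeneousBasisMod hx_hom hx hw_hom hw) (i₀ := 4) (by decide) hy fun j hj => hmul _ ?_
  fin_cases j <;> simp_all

end IsQuinticReduction

end NondegeneratePairing

section NormalForm

section

variable {K V : Type*} [Field K] [AddCommGroup V] [Module K V] {B : LinearMap.BilinForm K V}

theorem exists_ne_zero_apply_self_eq_zero [IsAlgClosed K] (hV : 1 < Module.finrank K V)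
    (B : LinearMap.BilinForm K V) : ∃ x ≠ 0, B x x = 0 := by
  have : Nontrivial V := Module.nontrivial_of_finrank_pos (R := K) (by omega)
  obtain ⟨v, hv⟩ := exists_ne (0 : V)
  obtain ⟨u, hu⟩ : ∃ u, ∀ a : K, a • v ≠ u := by
    by_contra! h
    exact hV.ne' ((finrank_eq_one_iff_of_nonzero' v hv).2 h)
  by_cases hBv : B v v = 0
  · exact ⟨v, hv, hBv⟩
  obtain ⟨t, ht⟩ := IsAlgClosed.exists_root (Polynomial.C (B v v) * Polynomial.X ^ 2 +
    Polynomial.C (B u v + B v u) * Polynomial.X + Polynomial.C (B u u))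
    (by rw [Polynomial.degree_quadratic hBv]; decide)
  refine ⟨u + t • v, fun h => hu (-t) ?_, ?_⟩
  · rw [neg_smul, eq_comm]
    exact eq_neg_of_add_eq_zero_left h
  · simp only [Polynomial.IsRoot, Polynomial.eval_add, Polynomial.eval_mul, Polynomial.eval_C,
      Polynomial.eval_pow, Polynomial.eval_X] at ht
    simp only [map_add, map_smul, LinearMap.add_apply, LinearMap.smul_apply, smul_eq_mul]
    linear_combination ht

theorem exists_hyperbolic_pair [IsAlgClosed K] (hV : 1 < Module.finrank K V)
    (hsep : B.SeparatingLeft) : ∃ x z, B x x = 0 ∧ B x z = 1 := by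
  obtain ⟨x, hx_ne, hx⟩ := exists_ne_zero_apply_self_eq_zero hV B
  obtain ⟨v, hv⟩ : ∃ v, B x v ≠ 0 := by
    by_contra! h
    exact hx_ne (hsep x h)
  exact ⟨x, (B x v)⁻¹ • v, hx, by rw [map_smul, smul_eq_mul, inv_mul_cancel₀ hv]⟩

theorem exists_anisotropic_orthogonal (hV : Module.finrank K V = 3) (hB : B.IsSymm)
    (hsep : B.SeparatingLeft) {x z : V} (hx : B x x = 0) (hxz : B x z = 1) :
    ∃ y, B x y = 0 ∧ B z y = 0 ∧ B y y ≠ 0 := by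
  have : FiniteDimensional K V := Module.finite_of_finrank_pos (by omega)
  have hzx : B z x = 1 := by rw [hB.eq, hxz]
  let f : V →ₗ[K] K × K := (B x).prod (B z)
  have surjective : Function.Surjective f := fun p =>
    ⟨p.1 • z + (p.2 - p.1 * B z z) • x, by ext <;> simp [f, hx, hxz, hzx]⟩
  have finrank_ker : Module.finrank K f.ker = 1 := by
    have := f.finrank_range_add_finrank_ker
    rw [LinearMap.range_eq_top.2 surjective, finrank_top, Module.finrank_prod,
      Module.finrank_self] at this
    omega
  obtain ⟨⟨y, hy⟩, hy_ne, span_y⟩ := finrank_eq_one_iff'.1 finrank_ker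
  obtain ⟨hxy, hzy⟩ : B x y = 0 ∧ B z y = 0 := by simpa [f] using hy
  refine ⟨y, hxy, hzy, fun hyy => hy_ne (Subtype.ext (hsep y fun u => ?_))⟩
  obtain ⟨a, ha⟩ := span_y
    ⟨u - (B x u • z + (B z u - B x u * B z z) • x), by simp [f, hx, hxz, hzx]⟩
  have hu := congrArg (B y) (congrArg Subtype.val ha)
  simpa [hyy, hB.eq y x, hB.eq y z, hxy, hzy, eq_comm] using hu

theorem exists_gram_normal_form [IsAlgClosed K] (hV : Module.finrank K V = 3) (hB : B.IsSymm)
    (hsep : B.SeparatingLeft) :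
    ∃ x y z, B x x = 0 ∧ B x y = 0 ∧ B y z = 0 ∧ B y y = 1 ∧ B x z = 1 := by
  obtain ⟨x, z, hx, hxz⟩ := exists_hyperbolic_pair (by omega) hsep
  obtain ⟨y, hxy, hzy, hyy⟩ := exists_anisotropic_orthogonal hV hB hsep hx hxz
  obtain ⟨s, hs⟩ := IsAlgClosed.exists_eq_mul_self (B y y)
  have hs_ne : s ≠ 0 := by
    rintro rfl
    exact hyy (by rw [hs, zero_mul])
  refine ⟨x, s⁻¹ • y, z, hx, by simp [hxy], by simp [hB.eq y z, hzy], ?_, hxz⟩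
  simp [hs, hs_ne]

end

variable {K : Type} [Field K] {r : ℕ} {I N : Ideal (PS K r)} {ls : List (PS K r)}

/-- Linear forms `x, y, z` whose pairwise products modulo `N` are the multiples of `x * z ∉ N`
with Gram matrix `![![0, 0, 1], ![0, 1, 0], ![1, 0, c]]`. -/
structure IsNormalTriple (N : Ideal (PS K r)) (x y z : PS K r) (c : K) : Prop where
  isHomogeneous_x : x.IsHomogeneous 1
  isHomogeneous_y : y.IsHomogeneous 1
  isHomogeneous_z : z.IsHomogeneous 1
  x_mul_x : x * x ∈ N
  x_mul_y : x * y ∈ N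
  y_mul_z : y * z ∈ N
  y_mul_y : y * y - x * z ∈ N
  z_mul_z : z * z - C c * (x * z) ∈ N
  x_mul_z : x * z ∉ N

theorem IsQuinticReduction.exists_dual (h : IsQuinticReduction I ls) :
    ∃ μ : Module.Dual K (PS K r ⧸ I ⊔ Ideal.ofList ls), ∀ f : PS K r, f.IsHomogeneous 2 →
      μ (Ideal.Quotient.mk _ f) = 0 → f ∈ I ⊔ Ideal.ofList ls := by
  obtain ⟨⟨w, hw⟩, hw_ne, span_w⟩ := finrank_eq_one_iff'.1 h.finrank_quotComponent_two
  obtain ⟨μ, hμ⟩ : ∃ μ : Module.Dual K (PS K r ⧸ I ⊔ Ideal.ofList ls), μ w ≠ 0 := by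
    by_contra! hμ
    exact hw_ne (Subtype.ext ((Module.forall_dual_apply_eq_zero_iff K w).1 hμ))
  refine ⟨μ, fun f hf hμf => ?_⟩
  obtain ⟨a, ha⟩ := span_w ⟨_, mk_mem_quotComponent hf⟩
  have ha : a • w = Ideal.Quotient.mk _ f := congrArg Subtype.val ha
  rw [← ha, map_smul, smul_eq_mul, mul_eq_zero, or_iff_left hμ] at hμf
  rw [← Ideal.Quotient.eq_zero_iff_mem, ← ha, hμf, zero_smul]

theorem IsQuinticReduction.exists_isNormalTriple [IsAlgClosed K] [I.IsPrime]
    (h : IsQuinticReduction I ls) :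
    ∃ x y z c, IsNormalTriple (I ⊔ Ideal.ofList ls) x y z c := by
  obtain ⟨μ, hμ⟩ := h.exists_dual
  let V := quotComponent K r (I ⊔ Ideal.ofList ls) 1
  let B : LinearMap.BilinForm K V := ((LinearMap.mul K _).compr₂ μ).domRestrict₁₂ V V
  have B_apply (u v : V) : B u v = μ (u * v) := rfl
  have hB : B.IsSymm := ⟨fun u v => by rw [B_apply, B_apply, mul_comm]⟩
  have hsep : B.SeparatingLeft := fun ⟨u, hu⟩ hBu => by
    obtain ⟨f, hf, rfl⟩ := mem_quotComponent.1 hu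
    refine Subtype.ext (Ideal.Quotient.eq_zero_iff_mem.2 (h.mem_sup_of_forall_mul_mem hf ?_))
    exact fun g hg => hμ _ (hf.mul hg) (hBu ⟨_, mk_mem_quotComponent hg⟩)
  obtain ⟨⟨x, hx_mem⟩, ⟨y, hy_mem⟩, ⟨z, hz_mem⟩, hxx, hxy, hyz, hyy, hxz⟩ :=
    exists_gram_normal_form h.finrank_quotComponent_one hB hsep
  obtain ⟨x, hx, rfl⟩ := mem_quotComponent.1 hx_mem
  obtain ⟨y, hy, rfl⟩ := mem_quotComponent.1 hy_mem
  obtain ⟨z, hz, rfl⟩ := mem_quotComponent.1 hz_mem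
  simp only [B_apply, ← map_mul] at hxx hxy hyz hyy hxz
  set c := μ (Ideal.Quotient.mk _ (z * z)) with hc
  refine ⟨x, y, z, c, hx, hy, hz, hμ _ (hx.mul hx) hxx,
    hμ _ (hx.mul hy) hxy, hμ _ (hy.mul hz) hyz, hμ _ ((hy.mul hy).sub (hx.mul hz)) ?_,
    hμ _ ((hz.mul hz).sub ((hx.mul hz).C_mul _)) ?_, fun hmem => ?_⟩
  · rw [map_sub, map_sub, hyy, hxz, sub_self]
  · have mk_C_mul : Ideal.Quotient.mk (I ⊔ Ideal.ofList ls) (C c * (x * z)) =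
        c • Ideal.Quotient.mk _ (x * z) := by
      rw [← smul_eq_C_mul]
      rfl
    rw [map_sub, map_sub, mk_C_mul, map_smul, hxz, smul_eq_mul, mul_one, hc, sub_self]
  · rw [Ideal.Quotient.eq_zero_iff_mem.2 hmem, map_zero] at hxz
    exact zero_ne_one hxz

namespace IsNormalTriple

variable {x y z : PS K r} {c : K} (h : IsNormalTriple N x y z c)
include h

theorem isHomogeneous_vec (k : Fin 3) : (![x, y, z] k).IsHomogeneous 1 := by
  fin_cases k
  exacts [h.isHomogeneous_x, h.isHomogeneous_y, h.isHomogeneous_z]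

theorem eq_zero_of_C_mul_mem {a : K} (ha : C a * (x * z) ∈ N) : a = 0 := by
  by_contra hne
  exact h.x_mul_z ((Ideal.unit_mul_mem_iff_mem _
    ((isUnit_iff_ne_zero.2 hne).map (C (σ := Fin (r + 1))))).1 ha)

theorem eq_zero_of_sum_mem (e : Fin 3 → K) (he : ∑ k, C (e k) * ![x, y, z] k ∈ N) : e = 0 := by
  rw [Fin.sum_univ_three] at he
  change C (e 0) * x + C (e 1) * y + C (e 2) * z ∈ N at he
  have e_two : e 2 = 0 := by
    refine h.eq_zero_of_C_mul_mem ?_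
    convert N.sub_mem (N.mul_mem_left x he) (N.add_mem (N.mul_mem_left (C (e 0)) h.x_mul_x)
      (N.mul_mem_left (C (e 1)) h.x_mul_y)) using 1
    ring
  rw [e_two, C_0, zero_mul, add_zero] at he
  have e_one : e 1 = 0 := by
    refine h.eq_zero_of_C_mul_mem ?_
    convert N.sub_mem (N.mul_mem_left y he) (N.add_mem (N.mul_mem_left (C (e 0)) h.x_mul_y)
      (N.mul_mem_left (C (e 1)) h.y_mul_y)) using 1
    ring
  rw [e_one, C_0, zero_mul, add_zero] at he
  have e_zero : e 0 = 0 := h.eq_zero_of_C_mul_mem (by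
    rw [← mul_assoc]
    exact N.mul_mem_right z he)
  ext k
  fin_cases k
  exacts [e_zero, e_one, e_two]

end IsNormalTriple

theorem IsQuinticReduction.isHomogeneousBasisMod_of_isNormalTriple (h : IsQuinticReduction I ls)
    {x y z : PS K r} {c : K} (ht : IsNormalTriple (I ⊔ Ideal.ofList ls) x y z c) :
    IsHomogeneousBasisMod (I ⊔ Ideal.ofList ls) ![1, x, y, z, x * z] ![0, 1, 1, 1, 2] :=
  h.isHomogeneousBasisMod ht.isHomogeneous_vec ht.eq_zero_of_sum_mem
    (ht.isHomogeneous_x.mul ht.isHomogeneous_z) ht.x_mul_z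

end NormalForm

section PfaffianMatrices

variable {R : Type} [CommRing R]

/-- The alternating `5 × 5` matrix whose entries above the diagonal are `n 0, …, n 9`, read row by
row. -/
def skewMatrix (n : Fin 10 → R) : Matrix (Fin 5) (Fin 5) R :=
  !![0, n 0, n 1, n 2, n 3;
     -n 0, 0, n 4, n 5, n 6;
     -n 1, -n 4, 0, n 7, n 8;
     -n 2, -n 5, -n 7, 0, n 9;
     -n 3, -n 6, -n 8, -n 9, 0]

theorem skewMatrix_transpose (n : Fin 10 → R) : (skewMatrix n).transpose = -skewMatrix n := by
  ext i j
  fin_cases i <;> fin_cases j <;> simp [skewMatrix]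

theorem subPfaffian_skewMatrix (n : Fin 10 → R) :
    subPfaffian (skewMatrix n) =
      ![n 4 * n 9 - n 5 * n 8 + n 6 * n 7, n 1 * n 9 - n 2 * n 8 + n 3 * n 7,
        n 0 * n 9 - n 2 * n 6 + n 3 * n 5, n 0 * n 8 - n 1 * n 6 + n 3 * n 4,
        n 0 * n 7 - n 1 * n 5 + n 2 * n 4] := by
  ext i
  fin_cases i <;> simp [skewMatrix, subPfaffian, pfaff4, Fin.succAbove, Fin.lt_def]

theorem subPfaffian_map {R' : Type} [CommRing R'] (f : R →+* R') (M : Matrix (Fin 5) (Fin 5) R)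
    (i : Fin 5) : subPfaffian (M.map f) i = f (subPfaffian M i) := by
  simp [subPfaffian, pfaff4]

theorem skewMatrix_map {R' : Type} [CommRing R'] (f : R →+* R') (n : Fin 10 → R) :
    (skewMatrix n).map f = skewMatrix (f ∘ n) := by
  ext i j
  fin_cases i <;> fin_cases j <;> simp [skewMatrix]

/-- The submaximal Pfaffians of `skewMatrix n` with the signs of the Buchsbaum–Eisenbud complex. -/
def signedPfaffian (n : Fin 10 → R) (i : Fin 5) : R :=
  (-1) ^ (i : ℕ) * subPfaffian (skewMatrix n) i

theorem signedPfaffian_eq (n : Fin 10 → R) :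
    signedPfaffian n =
      ![n 4 * n 9 - n 5 * n 8 + n 6 * n 7, -(n 1 * n 9 - n 2 * n 8 + n 3 * n 7),
        n 0 * n 9 - n 2 * n 6 + n 3 * n 5, -(n 0 * n 8 - n 1 * n 6 + n 3 * n 4),
        n 0 * n 7 - n 1 * n 5 + n 2 * n 4] := by
  ext i
  fin_cases i <;> simp [signedPfaffian, subPfaffian_skewMatrix] <;> ring

theorem skewMatrix_mulVec_apply (n : Fin 10 → R) (v : Fin 5 → R) :
    (skewMatrix n).mulVec v =
      ![n 0 * v 1 + n 1 * v 2 + n 2 * v 3 + n 3 * v 4,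
        -n 0 * v 0 + n 4 * v 2 + n 5 * v 3 + n 6 * v 4,
        -n 1 * v 0 - n 4 * v 1 + n 7 * v 3 + n 8 * v 4,
        -n 2 * v 0 - n 5 * v 1 - n 7 * v 2 + n 9 * v 4,
        -n 3 * v 0 - n 6 * v 1 - n 8 * v 2 - n 9 * v 3] := by
  ext i
  fin_cases i <;> simp [skewMatrix, Matrix.mulVec, dotProduct, Fin.sum_univ_five] <;> ring

theorem skewMatrix_mulVec_signedPfaffian (n : Fin 10 → R) :
    (skewMatrix n).mulVec (signedPfaffian n) = 0 := by
  rw [skewMatrix_mulVec_apply, signedPfaffian_eq]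
  ext i
  fin_cases i <;> simp <;> ring

theorem mul_signedPfaffian_comm (n : Fin 10 → R) {v : Fin 5 → R}
    (hv : (skewMatrix n).mulVec v = 0) (i j : Fin 5) :
    v i * signedPfaffian n j = v j * signedPfaffian n i := by
  rw [skewMatrix_mulVec_apply] at hv
  have row₀ : n 0 * v 1 + n 1 * v 2 + n 2 * v 3 + n 3 * v 4 = 0 := congrFun hv 0
  have row₁ : -n 0 * v 0 + n 4 * v 2 + n 5 * v 3 + n 6 * v 4 = 0 := congrFun hv 1
  have row₂ : -n 1 * v 0 - n 4 * v 1 + n 7 * v 3 + n 8 * v 4 = 0 := congrFun hv 2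
  have row₃ : -n 2 * v 0 - n 5 * v 1 - n 7 * v 2 + n 9 * v 4 = 0 := congrFun hv 3
  have row₄ : -n 3 * v 0 - n 6 * v 1 - n 8 * v 2 - n 9 * v 3 = 0 := congrFun hv 4
  rw [signedPfaffian_eq]
  fin_cases i <;> fin_cases j <;> simp <;> grind

end PfaffianMatrices

section StructureConstants

/-- Coefficients of the products `x²`, `xy`, `yz`, `y²`, `z²` with respect to `1, x, y, z, xz`; see
`IsMultiplicationTable`. -/
structure StructureConstants (R : Type*) where
  (α p q b₀ : R)
  (p' b₁ : R)
  (ε s b₂ : R)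
  (β δ ρ b₃ : R)
  (c ζ ε' σ b₄ : R)

variable {R A : Type} [CommRing R] [CommRing A]

/-- `1, x, y, z, xz` are linearly independent over `R` and span the products of two of `x, y, z`,
with structure constants `t`. The lifts `x, y, z` are chosen such that `xy` does not involve `x` and
`y`, and `yz` does not involve `y`. -/
structure IsMultiplicationTable (φ : R →+* A) (x y z : A) (t : StructureConstants R) : Prop where
  coeff_eq_zero : ∀ {u₀ u₁ u₂ u₃ u₄ : R},
    φ u₀ + φ u₁ * x + φ u₂ * y + φ u₃ * z + φ u₄ * (x * z) = 0 →
      u₀ = 0 ∧ u₁ = 0 ∧ u₂ = 0 ∧ u₃ = 0 ∧ u₄ = 0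
  x_mul_x : x * x = φ t.α * x + φ t.p * y + φ t.q * z + φ t.b₀
  x_mul_y : x * y = φ t.p' * z + φ t.b₁
  y_mul_z : y * z = φ t.ε * x + φ t.s * z + φ t.b₂
  y_mul_y : y * y = x * z + φ t.β * x + φ t.δ * y + φ t.ρ * z + φ t.b₃
  z_mul_z : z * z = φ t.c * (x * z) + φ t.ζ * x + φ t.ε' * y + φ t.σ * z + φ t.b₄

namespace IsMultiplicationTable

variable {φ : R →+* A} {x y z : A} {t : StructureConstants R}

theorem x_x_y_assoc (h : IsMultiplicationTable φ x y z t) :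
    t.p' = t.p ∧ t.b₀ = -t.p * t.δ ∧ t.b₁ = t.p * t.β + t.q * t.ε := by
  obtain ⟨-, coeff_x, coeff_y, -, coeff_xz⟩ := h.coeff_eq_zero
    (u₀ := -t.α * t.b₁ - t.p * t.b₃ - t.q * t.b₂)
    (u₁ := t.b₁ - t.p * t.β - t.q * t.ε)
    (u₂ := -t.b₀ - t.p * t.δ)
    (u₃ := -t.α * t.p' - t.p * t.ρ - t.q * t.s)
    (u₄ := t.p' - t.p) (by
      simp only [map_sub, map_mul, map_neg]
      linear_combination y * h.x_mul_x + (φ t.α - x) * h.x_mul_y + φ t.q * h.y_mul_z +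
        φ t.p * h.y_mul_y)
  exact ⟨by linear_combination coeff_xz, by linear_combination -coeff_y,
    by linear_combination coeff_x⟩

theorem x_y_z_assoc (h : IsMultiplicationTable φ x y z t) :
    t.s = t.p' * t.c ∧ t.b₂ = t.p' * t.ζ - t.α * t.ε := by
  obtain ⟨-, coeff_x, -, -, coeff_xz⟩ := h.coeff_eq_zero
    (u₀ := t.ε * t.b₀ - t.p' * t.b₄)
    (u₁ := t.α * t.ε - t.p' * t.ζ + t.b₂)
    (u₂ := t.p * t.ε - t.p' * t.ε')
    (u₃ := t.q * t.ε - t.p' * t.σ - t.b₁)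
    (u₄ := t.s - t.p' * t.c) (by
      simp only [map_add, map_sub, map_mul]
      linear_combination -φ t.ε * h.x_mul_x + z * h.x_mul_y - x * h.y_mul_z + φ t.p' * h.z_mul_z)
  exact ⟨by linear_combination coeff_xz, by linear_combination coeff_x⟩

theorem x_y_y_assoc (h : IsMultiplicationTable φ x y z t) :
    t.ρ = -t.α - t.q * t.c ∧ t.b₃ = t.p' * t.ε - t.p * t.ε - t.α * t.β - t.q * t.ζ := by
  obtain ⟨-, coeff_x, -, -, coeff_xz⟩ := h.coeff_eq_zero
    (u₀ := t.p * t.b₂ + t.q * t.b₄ - t.p' * t.b₂ + t.β * t.b₀ + t.δ * t.b₁)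
    (u₁ := t.α * t.β + t.p * t.ε + t.q * t.ζ - t.p' * t.ε + t.b₃)
    (u₂ := t.p * t.β + t.q * t.ε' - t.b₁)
    (u₃ := t.p * t.s + t.q * t.β + t.q * t.σ - t.p' * t.s + t.p' * t.δ + t.b₀)
    (u₄ := t.α + t.q * t.c + t.ρ) (by
      simp only [map_add, map_sub, map_mul]
      linear_combination (-z - φ t.β) * h.x_mul_x + (y - φ t.δ) * h.x_mul_y +
        (φ t.p' - φ t.p) * h.y_mul_z - x * h.y_mul_y - φ t.q * h.z_mul_z)
  exact ⟨by linear_combination coeff_xz, by linear_combination coeff_x⟩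

theorem y_y_z_assoc (h : IsMultiplicationTable φ x y z t) :
    t.σ = -t.β - (t.α + t.q * t.c + t.ρ) * t.c := by
  obtain ⟨-, -, -, -, coeff_xz⟩ := h.coeff_eq_zero
    (u₀ := t.p * t.b₂ * t.c + t.q * t.b₄ * t.c - t.ε * t.b₁ - t.s * t.b₂ + t.δ * t.b₂ +
      t.ρ * t.b₄ + t.ζ * t.b₀ + t.ε' * t.b₁)
    (u₁ := t.α * t.ζ + t.p * t.ε * t.c + t.q * t.ζ * t.c - t.ε * t.s + t.ε * t.δ + t.ρ * t.ζ +
      t.b₄)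
    (u₂ := t.p * t.ζ + t.q * t.ε' * t.c + t.ρ * t.ε' - t.b₂)
    (u₃ := t.p * t.s * t.c + t.q * t.ζ + t.q * t.σ * t.c - t.p' * t.ε + t.p' * t.ε' + t.s * t.δ -
      t.s ^ 2 + t.ρ * t.σ + t.b₀ * t.c + t.b₃)
    (u₄ := t.α * t.c + t.q * t.c ^ 2 + t.β + t.ρ * t.c + t.σ) (by
      simp only [map_add, map_sub, map_mul, map_pow]
      linear_combination (-φ t.c * z - φ t.ζ) * h.x_mul_x + (φ t.ε - φ t.ε') * h.x_mul_y +
        (y - φ t.p * φ t.c + φ t.s - φ t.δ) * h.y_mul_z - z * h.y_mul_y -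
        (x + φ t.q * φ t.c + φ t.ρ) * h.z_mul_z)
  linear_combination coeff_xz

theorem y_z_z_assoc (h : IsMultiplicationTable φ x y z t) :
    t.ε' = t.ε + (t.s - t.p' * t.c) * t.c ∧ t.b₄ = t.s * t.ε' - t.p' * t.ε' * t.c - t.δ * t.ε' := by
  obtain ⟨-, -, coeff_y, -, coeff_xz⟩ := h.coeff_eq_zero
    (u₀ := t.p' * t.b₄ * t.c - t.s * t.b₄ + t.ζ * t.b₁ + t.ε' * t.b₃ + t.σ * t.b₂)
    (u₁ := t.p' * t.ζ * t.c + t.ε * t.σ - t.s * t.ζ + t.β * t.ε')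
    (u₂ := t.p' * t.ε' * t.c - t.s * t.ε' + t.δ * t.ε' + t.b₄)
    (u₃ := t.p' * t.ζ + t.p' * t.σ * t.c + t.ρ * t.ε' + t.b₁ * t.c - t.b₂)
    (u₄ := t.p' * t.c ^ 2 - t.ε - t.s * t.c + t.ε') (by
      simp only [map_add, map_sub, map_mul, map_pow]
      linear_combination (-φ t.c * z - φ t.ζ) * h.x_mul_y +
        (z - φ t.σ) * h.y_mul_z - φ t.ε' * h.y_mul_y +
        (-y - φ t.p' * φ t.c + φ t.s) * h.z_mul_z)
  exact ⟨by linear_combination coeff_xz, by linear_combination coeff_y⟩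

end IsMultiplicationTable

/-- The entries above the diagonal of the `5 × 5` alternating matrix whose submaximal Pfaffians are,
up to sign, the five relations of `IsMultiplicationTable`. -/
def StructureConstants.pfaffianEntries (t : StructureConstants R) (φ : R →+* A) (x y z : A) :
    Fin 10 → A :=
  ![φ t.c * z + φ t.ζ, -z - φ t.β, φ t.ε, y, y - φ t.δ, -z, φ t.α - x, x, φ t.q, φ t.p]

theorem StructureConstants.map_pfaffianEntries {B : Type} [CommRing B] (f : A →+* B)
    (t : StructureConstants R) (φ : R →+* A) (x y z : A) (i : Fin 10) :
    f (t.pfaffianEntries φ x y z i) = t.pfaffianEntries (f.comp φ) (f x) (f y) (f z) i := by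
  fin_cases i <;> simp [pfaffianEntries]

theorem IsMultiplicationTable.subPfaffian_eq_zero {φ : R →+* A} {x y z : A}
    {t : StructureConstants R} (h : IsMultiplicationTable φ x y z t) (i : Fin 5) :
    subPfaffian (skewMatrix (t.pfaffianEntries φ x y z)) i = 0 := by
  obtain ⟨hp', hb₀, hb₁⟩ := h.x_x_y_assoc
  obtain ⟨hs, hb₂⟩ := h.x_y_z_assoc
  obtain ⟨hρ, hb₃⟩ := h.x_y_y_assoc
  obtain ⟨hε', hb₄⟩ := h.y_z_z_assoc
  have hσ := h.y_y_z_assoc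
  have hxx := h.x_mul_x
  have hxy := h.x_mul_y
  have hyz := h.y_mul_z
  have hyy := h.y_mul_y
  have hzz := h.z_mul_z
  simp only [hσ, hρ, hb₄, hb₃, hb₂, hb₁, hb₀, hε', hs, hp', map_add, map_sub, map_mul, map_neg]
    at hxx hxy hyz hyy hzz
  rw [subPfaffian_skewMatrix]
  fin_cases i <;> simp only [StructureConstants.pfaffianEntries]
  · change (y - φ t.δ) * φ t.p - -z * φ t.q + (φ t.α - x) * x = 0
    linear_combination -hxx
  · change (-z - φ t.β) * φ t.p - φ t.ε * φ t.q + y * x = 0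
    linear_combination hxy
  · change (φ t.c * z + φ t.ζ) * φ t.p - φ t.ε * (φ t.α - x) + y * -z = 0
    linear_combination -hyz
  · change (φ t.c * z + φ t.ζ) * φ t.q - (-z - φ t.β) * (φ t.α - x) + y * (y - φ t.δ) = 0
    linear_combination hyy
  · change (φ t.c * z + φ t.ζ) * x - (-z - φ t.β) * -z + φ t.ε * (y - φ t.δ) = 0
    linear_combination -hzz

end StructureConstants

section LiftedRelations

variable {K : Type} [Field K] {r : ℕ}

theorem IsNormalTriple.of_sub_mem {N : Ideal (PS K r)} {x y z x' y' z' : PS K r} {c : K}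
    (h : IsNormalTriple N x y z c) (hx'_hom : x'.IsHomogeneous 1) (hy'_hom : y'.IsHomogeneous 1)
    (hz'_hom : z'.IsHomogeneous 1) (hx' : x' - x ∈ N) (hy' : y' - y ∈ N) (hz' : z' - z ∈ N) :
    IsNormalTriple N x' y' z' c := by
  obtain ⟨-, -, -, hxx, hxy, hyz, hyy, hzz, hxz⟩ := h
  refine ⟨hx'_hom, hy'_hom, hz'_hom, ?_, ?_, ?_, ?_, ?_, ?_⟩ <;>
  simp only [← Ideal.Quotient.eq_zero_iff_mem, map_sub, map_mul, sub_eq_zero] at * <;>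
  simpa only [hx', hy', hz']

/-- The coefficients which occur in `pfaffianEntries` have the degree forced by `x, y, z` being
linear forms. -/
structure StructureConstants.IsGraded {m : ℕ} (t : StructureConstants (MvPolynomial (Fin m) K))
    (c : K) : Prop where
  c_eq : t.c = C c
  isHomogeneous_α : t.α.IsHomogeneous 1
  isHomogeneous_p : t.p.IsHomogeneous 1
  isHomogeneous_q : t.q.IsHomogeneous 1
  isHomogeneous_ε : t.ε.IsHomogeneous 1
  isHomogeneous_β : t.β.IsHomogeneous 1
  isHomogeneous_δ : t.δ.IsHomogeneous 1
  isHomogeneous_ζ : t.ζ.IsHomogeneous 1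

variable {I : Ideal (PS K r)} {ls : List (PS K r)}

theorem IsLinearRegularSequence.isHomogeneous_aeval (h : IsLinearRegularSequence I ls)
    {p : MvPolynomial (Fin ls.length) K} {n : ℕ} (hp : p.IsHomogeneous n) :
    (aeval ls.get p : PS K r).IsHomogeneous n := by
  simpa using hp.aeval ls.get fun i => h.isHomogeneous _ (ls.get_mem i)

theorem aeval_get_mem_of_isHomogeneous {p : MvPolynomial (Fin ls.length) K}
    (hp : p.IsHomogeneous 1) : aeval ls.get p ∈ Ideal.ofList ls := by
  have h := aeval_get_sub_C_constantCoeff_mem p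
  rwa [constantCoeff_eq, hp.coeff_eq_zero (by simp), C_0, sub_zero] at h

namespace IsQuinticReduction

variable {x y z : PS K r} {c : K}

theorem exists_quadratic_relation (h : IsQuinticReduction I ls)
    (ht : IsNormalTriple (I ⊔ Ideal.ofList ls) x y z c) {f : PS K r} (hf : f.IsHomogeneous 2)
    (hmem : f ∈ I ⊔ Ideal.ofList ls) :
    ∃ u₁ u₂ u₃ v : MvPolynomial (Fin ls.length) K,
      u₁.IsHomogeneous 1 ∧ u₂.IsHomogeneous 1 ∧ u₃.IsHomogeneous 1 ∧
      f - (aeval ls.get u₁ * x + aeval ls.get u₂ * y + aeval ls.get u₃ * z + aeval ls.get v) ∈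
        I := by
  have hb := h.isHomogeneousBasisMod_of_isNormalTriple ht
  obtain ⟨p, hp, -, hfp⟩ := h.exists_homogeneous_repr hb hf
  have sum_mem := (Submodule.sub_mem_iff_right _ hmem).1 (Submodule.mem_sup_left hfp)
  have p_four : p 4 = 0 := hb.eq_zero_of_isHomogeneous_zero sum_mem (hp 4 0 rfl)
  refine ⟨p 1, p 2, p 3, p 0, hp 1 1 rfl, hp 2 1 rfl, hp 3 1 rfl, ?_⟩
  rw [Fin.sum_univ_five, p_four] at hfp
  convert hfp using 1
  simp
  ring

theorem exists_isNormalTriple_reduced (h : IsQuinticReduction I ls)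
    (ht : IsNormalTriple (I ⊔ Ideal.ofList ls) x y z c) :
    ∃ (x y z : PS K r) (p' b₁ ε s b₂ : MvPolynomial (Fin ls.length) K),
      IsNormalTriple (I ⊔ Ideal.ofList ls) x y z c ∧ ε.IsHomogeneous 1 ∧
      x * y - (aeval ls.get p' * z + aeval ls.get b₁) ∈ I ∧
      y * z - (aeval ls.get ε * x + aeval ls.get s * z + aeval ls.get b₂) ∈ I := by
  obtain ⟨u₁, u₂, u₃, v, hu₁, hu₂, -, hxy⟩ := h.exists_quadratic_relation ht
    (ht.isHomogeneous_x.mul ht.isHomogeneous_y) ht.x_mul_y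
  obtain ⟨ε, w₂, w₃, w, hε, hw₂, -, hyz⟩ := h.exists_quadratic_relation ht
    (ht.isHomogeneous_y.mul ht.isHomogeneous_z) ht.y_mul_z
  have mem {u : MvPolynomial (Fin ls.length) K} (hu : u.IsHomogeneous 1) (x : PS K r) :
      x - aeval ls.get u - x ∈ I ⊔ Ideal.ofList ls := by
    rw [sub_right_comm, sub_self, zero_sub, neg_mem_iff]
    exact Submodule.mem_sup_right (aeval_get_mem_of_isHomogeneous hu)
  refine ⟨x - aeval ls.get u₂, y - aeval ls.get u₁, z - aeval ls.get w₂,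
    u₃, v + u₁ * u₂ + u₃ * w₂, ε, w₃ - u₁, w + ε * u₂ + w₃ * w₂,
    ht.of_sub_mem (ht.isHomogeneous_x.sub (h.isHomogeneous_aeval hu₂))
      (ht.isHomogeneous_y.sub (h.isHomogeneous_aeval hu₁))
      (ht.isHomogeneous_z.sub (h.isHomogeneous_aeval hw₂)) (mem hu₂ x) (mem hu₁ y) (mem hw₂ z),
    hε, ?_, ?_⟩
  · convert hxy using 1
    simp only [map_add, map_mul]
    ring
  · convert hyz using 1
    simp only [map_add, map_sub, map_mul]
    ring

theorem eq_zero_of_aeval_mem (h : IsQuinticReduction I ls)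
    (ht : IsNormalTriple (I ⊔ Ideal.ofList ls) x y z c)
    {u₀ u₁ u₂ u₃ u₄ : MvPolynomial (Fin ls.length) K}
    (hu : aeval ls.get u₀ + aeval ls.get u₁ * x + aeval ls.get u₂ * y + aeval ls.get u₃ * z +
      aeval ls.get u₄ * (x * z) ∈ I) :
    u₀ = 0 ∧ u₁ = 0 ∧ u₂ = 0 ∧ u₃ = 0 ∧ u₄ = 0 := by
  have eq_zero : ![u₀, u₁, u₂, u₃, u₄] = 0 :=
    forall_eq_zero_of_isWeaklyRegular h.isWeaklyRegular
      (h.isHomogeneousBasisMod_of_isNormalTriple ht).eq_zero (by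
        rw [Fin.sum_univ_five]
        simpa using hu)
  exact ⟨congrFun eq_zero 0, congrFun eq_zero 1, congrFun eq_zero 2, congrFun eq_zero 3,
    congrFun eq_zero 4⟩

theorem exists_isMultiplicationTable [IsAlgClosed K] [I.IsPrime] (h : IsQuinticReduction I ls) :
    ∃ (x y z : PS K r) (c : K) (t : StructureConstants (MvPolynomial (Fin ls.length) K)),
      IsNormalTriple (I ⊔ Ideal.ofList ls) x y z c ∧ t.IsGraded c ∧
      IsMultiplicationTable
        ((Ideal.Quotient.mk I).comp (aeval ls.get : _ →ₐ[K] PS K r).toRingHom)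
        (Ideal.Quotient.mk I x) (Ideal.Quotient.mk I y) (Ideal.Quotient.mk I z) t := by
  obtain ⟨_, _, _, c, ht⟩ := h.exists_isNormalTriple
  obtain ⟨x, y, z, p', b₁, ε, s, b₂, ht, hε, hxy, hyz⟩ := h.exists_isNormalTriple_reduced ht
  have hx := ht.isHomogeneous_x
  have hy := ht.isHomogeneous_y
  have hz := ht.isHomogeneous_z
  obtain ⟨α, p, q, b₀, hα, hp, hq, hxx⟩ := h.exists_quadratic_relation ht (hx.mul hx) ht.x_mul_x
  obtain ⟨β, δ, ρ, b₃, hβ, hδ, -, hyy⟩ := h.exists_quadratic_relation ht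
    ((hy.mul hy).sub (hx.mul hz)) ht.y_mul_y
  obtain ⟨ζ, ε', σ, b₄, hζ, -, -, hzz⟩ := h.exists_quadratic_relation ht
    ((hz.mul hz).sub ((hx.mul hz).C_mul c)) ht.z_mul_z
  refine ⟨x, y, z, c, ⟨α, p, q, b₀, p', b₁, ε, s, b₂, β, δ, ρ, b₃, C c, ζ, ε', σ, b₄⟩, ht,
    ⟨rfl, hα, hp, hq, hε, hβ, hδ, hζ⟩, fun hu => h.eq_zero_of_aeval_mem ht ?_, ?_, ?_, ?_, ?_, ?_⟩
  · simpa [← Ideal.Quotient.eq_zero_iff_mem] using hu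
  all_goals
    simp only [← Ideal.Quotient.eq_zero_iff_mem, map_sub, map_add, map_mul] at hxx hxy hyz hyy hzz
    simp only [RingHom.comp_apply, AlgHom.toRingHom_eq_coe, RingHom.coe_coe, aeval_C,
      algebraMap_eq]
  · linear_combination hxx
  · linear_combination hxy
  · linear_combination hyz
  · linear_combination hyy
  · linear_combination hzz

theorem exists_pfaffianEntries [IsAlgClosed K] [I.IsPrime] (h : IsQuinticReduction I ls) :
    ∃ (x y z : PS K r) (c : K) (t : StructureConstants (MvPolynomial (Fin ls.length) K)),
      IsNormalTriple (I ⊔ Ideal.ofList ls) x y z c ∧ t.IsGraded c ∧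
      ∀ i, subPfaffian (skewMatrix (t.pfaffianEntries (aeval ls.get : _ →ₐ[K] PS K r).toRingHom
        x y z)) i ∈ I := by
  obtain ⟨x, y, z, c, t, ht, hgr, htable⟩ := h.exists_isMultiplicationTable
  refine ⟨x, y, z, c, t, ht, hgr, fun i => ?_⟩
  rw [← Ideal.Quotient.eq_zero_iff_mem, ← subPfaffian_map, skewMatrix_map]
  convert htable.subPfaffian_eq_zero i using 3
  exact funext fun j => t.map_pfaffianEntries _ _ _ _ _ j

end IsQuinticReduction

end LiftedRelations

section PfaffianIdeal

variable {K : Type} [Field K] {r : ℕ} {I Q M N : Ideal (PS K r)} {ls : List (PS K r)}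

theorem le_of_le_sup_span_singleton (hI : IsHomIdeal K r I) (hQ : IsHomIdeal K r Q) (hQI : Q ≤ I)
    {l : PS K r} (hl : l.IsHomogeneous 1) (hreg : IsSMulRegular (PS K r ⧸ I) l)
    (hIQ : I ≤ Q ⊔ Ideal.span {l}) : I ≤ Q := by
  have mem_of_isHomogeneous (n : ℕ) : ∀ f ∈ I, f.IsHomogeneous n → f ∈ Q := by
    induction n with
    | zero =>
      exact fun f hf hf_hom => hQ.mem_of_mem_sup_span (by simpa using hl) hf_hom one_pos (hIQ hf)
    | succ n ih =>
      intro f hf hf_hom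
      obtain ⟨q, hq, g, hg_hom, rfl⟩ := hQ.exists_eq_add_mul hl hf_hom (hIQ hf)
      have g_mem : g ∈ I := by
        refine mem_of_isSMulRegular_quotient_of_smul_mem hreg ?_
        rw [smul_eq_mul, mul_comm]
        exact (Submodule.add_mem_iff_right _ (hQI hq)).1 hf
      exact Q.add_mem hq (Q.mul_mem_right _ (ih g g_mem hg_hom))
  exact fun f hf => hQ.mem_iff.2 fun n =>
    mem_of_isHomogeneous n _ (hI f hf n) (homogeneousComponent_isHomogeneous n f)

theorem IsLinearRegularSequence.le_of_le_sup (h : IsLinearRegularSequence I ls)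
    (hQ : IsHomIdeal K r Q) (hQI : Q ≤ I) (hIQ : I ≤ Q ⊔ Ideal.ofList ls) : I ≤ Q := by
  induction ls generalizing I Q with
  | nil => simpa using hIQ
  | cons l ls ih =>
    obtain ⟨hI, hl, hreg, htail⟩ := IsLinearRegularSequence.cons_iff.1 h
    refine le_of_le_sup_span_singleton hI hQ hQI hl hreg (le_sup_left.trans
      (ih htail (hQ.sup (isHomIdeal_span (by simpa using ⟨1, hl⟩))) (sup_le_sup_right hQI _) ?_))
    rw [Ideal.ofList_cons, ← sup_assoc] at hIQ
    exact sup_le hIQ (le_sup_right.trans le_sup_left)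

theorem mem_pow_of_isHomogeneous (hX : ∀ i, X i ∈ I) {f : PS K r} {k n : ℕ}
    (hf : f.IsHomogeneous n) (hkn : k ≤ n) : f ∈ I ^ k :=
  Ideal.pow_right_mono (Ideal.span_le.2 (Set.range_subset_iff.2 hX)) k
    (mem_pow_idealOfVars_of_isHomogeneous hf hkn)

namespace IsNormalTriple

variable {x y z : PS K r} {c : K}

theorem span_mul_span_le (h : IsNormalTriple M x y z c) :
    Ideal.span {x, y, z} * Ideal.span {x, y, z} ≤ M ⊔ Ideal.span {x * z} := by
  have xz_mem : x * z ∈ M ⊔ Ideal.span {x * z} :=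
    Submodule.mem_sup_right (Ideal.mem_span_singleton_self _)
  have hyy := Submodule.mem_sup_left (T := Ideal.span {x * z}) h.y_mul_y
  have hzz := Submodule.mem_sup_left (T := Ideal.span {x * z}) h.z_mul_z
  rw [Ideal.span_mul_span', Ideal.span_le]
  rintro _ ⟨a, rfl | rfl | rfl, b, rfl | rfl | rfl, rfl⟩
  · exact Submodule.mem_sup_left h.x_mul_x
  · exact Submodule.mem_sup_left h.x_mul_y
  · exact xz_mem
  · exact Submodule.mem_sup_left ((mul_comm b a).subst (motive := (· ∈ M)) h.x_mul_y)
  · exact (Submodule.sub_mem_iff_left _ xz_mem).1 hyy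
  · exact Submodule.mem_sup_left h.y_mul_z
  · exact mul_comm b a ▸ xz_mem
  · exact Submodule.mem_sup_left ((mul_comm b a).subst (motive := (· ∈ M)) h.y_mul_z)
  · exact (Submodule.sub_mem_iff_left _ (Ideal.mul_mem_left _ _ xz_mem)).1 hzz

theorem span_mul_span_singleton_le (h : IsNormalTriple M x y z c) :
    Ideal.span {x, y, z} * Ideal.span {x * z} ≤ M := by
  rw [Ideal.span_mul_span', Ideal.span_le]
  rintro _ ⟨a, rfl | rfl | rfl, _, rfl, rfl⟩
  · simpa only [SetLike.mem_coe, mul_assoc] using M.mul_mem_right z h.x_mul_x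
  · simpa only [SetLike.mem_coe, mul_left_comm] using M.mul_mem_left x h.y_mul_z
  · convert M.add_mem (M.mul_mem_left x h.z_mul_z)
      (M.mul_mem_left (C c * a) h.x_mul_x) using 1
    simp only [SetLike.mem_coe]
    ring_nf

theorem mem_sup_of_two_le (h : IsNormalTriple M x y z c)
    (hX : ∀ i, X i ∈ M ⊔ Ideal.span {x, y, z}) {f : PS K r} {n : ℕ} (hf : f.IsHomogeneous n)
    (hn : 2 ≤ n) : f ∈ M ⊔ Ideal.span {x * z} := by
  suffices sq_le : (M ⊔ Ideal.span {x, y, z}) ^ 2 ≤ M ⊔ Ideal.span {x * z} from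
    sq_le (mem_pow_of_isHomogeneous hX hf hn)
  rw [pow_two, Ideal.mul_sup, Ideal.sup_mul, Ideal.sup_mul]
  exact sup_le
    (sup_le (le_sup_of_le_left Ideal.mul_le_left) (le_sup_of_le_left Ideal.mul_le_right))
    (sup_le (le_sup_of_le_left Ideal.mul_le_left) h.span_mul_span_le)

theorem mem_of_three_le (h : IsNormalTriple M x y z c) (hM : IsHomIdeal K r M)
    (hX : ∀ i, X i ∈ M ⊔ Ideal.span {x, y, z}) {f : PS K r} {n : ℕ} (hf : f.IsHomogeneous n)
    (hn : 3 ≤ n) : f ∈ M := by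
  obtain ⟨n, rfl⟩ := Nat.exists_eq_add_of_le' hn
  obtain ⟨j, hj, g, hg, rfl⟩ := hM.exists_eq_add_mul (n := n + 1)
    (h.isHomogeneous_x.mul h.isHomogeneous_z) hf (h.mem_sup_of_two_le hX hf (by omega))
  have hg_mem : g ∈ M ⊔ Ideal.span {x, y, z} := by
    simpa using mem_pow_of_isHomogeneous hX hg (Nat.le_add_left 1 n)
  suffices mul_le : (M ⊔ Ideal.span {x, y, z}) * Ideal.span {x * z} ≤ M from
    M.add_mem hj (mul_le (Ideal.mul_mem_mul hg_mem (Ideal.mem_span_singleton_self _)))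
  rw [Ideal.sup_mul]
  exact sup_le Ideal.mul_le_left h.span_mul_span_singleton_le

theorem mem_sup_span (hb : IsHomogeneousBasisMod N ![1, x, y, z, x * z] ![0, 1, 1, 1, 2])
    (hlin : ∀ f ∈ N, f.IsHomogeneous 1 → f ∈ M) (i : Fin (r + 1)) :
    X i ∈ M ⊔ Ideal.span {x, y, z} := by
  obtain ⟨e, he, he_hom, hei⟩ := hb.exists_isHomogeneous_sub (isHomogeneous_X K i)
  rw [← sub_add_cancel (X i) (∑ k, C (e k) * ![1, x, y, z, x * z] k)]
  refine Ideal.add_mem _ (Submodule.mem_sup_left (hlin _ hei he_hom)) (Submodule.mem_sup_right ?_)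
  rw [Fin.sum_univ_five, he 0 (by decide), he 4 (by decide)]
  simp only [C_0, zero_mul, zero_add, add_zero]
  refine Ideal.add_mem _ (Ideal.add_mem _ ?_ ?_) ?_ <;>
  exact Ideal.mul_mem_left _ _ (Ideal.subset_span (by simp))

theorem le_of_le (h : IsNormalTriple N x y z c) (hNhom : IsHomIdeal K r N)
    (hb : IsHomogeneousBasisMod N ![1, x, y, z, x * z] ![0, 1, 1, 1, 2])
    (hM : IsNormalTriple M x y z c) (hMhom : IsHomIdeal K r M) (hMN : M ≤ N)
    (hlin : ∀ f ∈ N, f.IsHomogeneous 1 → f ∈ M) : N ≤ M := by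
  have hX := mem_sup_span hb hlin
  have mem_of_isHomogeneous (n : ℕ) (f : PS K r) (hf : f ∈ N) (hf_hom : f.IsHomogeneous n) :
      f ∈ M := by
    obtain hn | hn := le_or_gt 3 n
    · exact hM.mem_of_three_le hMhom hX hf_hom hn
    interval_cases n
    · rw [eq_zero_of_mem_of_isHomogeneous_zero (fun htop => h.x_mul_z (by simp [htop])) hf hf_hom]
      exact M.zero_mem
    · exact hlin f hf hf_hom
    · obtain ⟨j, hj, g, hg, rfl⟩ := hMhom.exists_eq_add_mul (n := 0)
        (hM.isHomogeneous_x.mul hM.isHomogeneous_z) hf_hom (hM.mem_sup_of_two_le hX hf_hom le_rfl)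
      rw [← totalDegree_zero_iff_isHomogeneous, totalDegree_eq_zero_iff_eq_C] at hg
      rw [hg] at hf ⊢
      rw [h.eq_zero_of_C_mul_mem ((Submodule.add_mem_iff_right _ (hMN hj)).1 hf), C_0, zero_mul,
        add_zero]
      exact hj
  exact fun f hf => hMhom.mem_iff.2 fun n =>
    mem_of_isHomogeneous n _ (hNhom f hf n) (homogeneousComponent_isHomogeneous n f)

end IsNormalTriple

end PfaffianIdeal

section PfaffianVariety

variable {K : Type} [Field K] {r : ℕ} {I Q : Ideal (PS K r)} {ls : List (PS K r)}

theorem isHomogeneous_skewMatrix {n : Fin 10 → PS K r} (hn : ∀ i, (n i).IsHomogeneous 1)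
    (i j : Fin 5) : (skewMatrix n i j).IsHomogeneous 1 := by
  fin_cases i <;> fin_cases j <;> simp [skewMatrix, hn, (hn _).neg, isHomogeneous_zero]

theorem isHomogeneous_subPfaffian {M : Matrix (Fin 5) (Fin 5) (PS K r)}
    (hM : ∀ i j, (M i j).IsHomogeneous 1) (i : Fin 5) : (subPfaffian M i).IsHomogeneous 2 :=
  (((hM _ _).mul (hM _ _)).sub ((hM _ _).mul (hM _ _))).add ((hM _ _).mul (hM _ _))

theorem isHomIdeal_span_subPfaffian {n : Fin 10 → PS K r} (hn : ∀ i, (n i).IsHomogeneous 1) :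
    IsHomIdeal K r (Ideal.span (Set.range (subPfaffian (skewMatrix n)))) :=
  isHomIdeal_span (Set.forall_mem_range.2 fun i =>
    ⟨2, isHomogeneous_subPfaffian (isHomogeneous_skewMatrix hn) i⟩)

namespace StructureConstants.IsGraded

variable {x y z : PS K r} {c : K} {t : StructureConstants (MvPolynomial (Fin ls.length) K)}

theorem isHomogeneous_pfaffianEntries (hgr : t.IsGraded c) (h : IsLinearRegularSequence I ls)
    (hx : x.IsHomogeneous 1) (hy : y.IsHomogeneous 1) (hz : z.IsHomogeneous 1) (i : Fin 10) :
    (t.pfaffianEntries (aeval ls.get : _ →ₐ[K] PS K r).toRingHom x y z i).IsHomogeneous 1 := by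
  have hom {u : MvPolynomial (Fin ls.length) K} (hu : u.IsHomogeneous 1) :
      (aeval ls.get u : PS K r).IsHomogeneous 1 := h.isHomogeneous_aeval hu
  fin_cases i
  · simpa [pfaffianEntries, hgr.c_eq] using (hz.C_mul c).add (hom hgr.isHomogeneous_ζ)
  · exact hz.neg.sub (hom hgr.isHomogeneous_β)
  · exact hom hgr.isHomogeneous_ε
  · exact hy
  · exact hy.sub (hom hgr.isHomogeneous_δ)
  · exact hz.neg
  · exact (hom hgr.isHomogeneous_α).sub hx
  · exact hx
  · exact hom hgr.isHomogeneous_q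
  · exact hom hgr.isHomogeneous_p

theorem isNormalTriple_sup (hgr : t.IsGraded c) (hx : x.IsHomogeneous 1) (hy : y.IsHomogeneous 1)
    (hz : z.IsHomogeneous 1) (hxz : x * z ∉ Q ⊔ Ideal.ofList ls)
    (hQ : ∀ i, subPfaffian (skewMatrix (t.pfaffianEntries
      (aeval ls.get : _ →ₐ[K] PS K r).toRingHom x y z)) i ∈ Q) :
    IsNormalTriple (Q ⊔ Ideal.ofList ls) x y z c := by
  set f := Ideal.Quotient.mk (Q ⊔ Ideal.ofList ls)
  have f_aeval {u : MvPolynomial (Fin ls.length) K} (hu : u.IsHomogeneous 1) :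
      f (aeval ls.get u) = 0 :=
    Ideal.Quotient.eq_zero_iff_mem.2 (Submodule.mem_sup_right (aeval_get_mem_of_isHomogeneous hu))
  have f_entries : f ∘ t.pfaffianEntries (aeval ls.get : _ →ₐ[K] PS K r).toRingHom x y z =
      ![f (C c) * f z, -f z, 0, f y, f y, -f z, -f x, f x, 0, 0] := by
    ext i
    fin_cases i <;> simp [pfaffianEntries, hgr.c_eq, f_aeval, hgr.isHomogeneous_α,
      hgr.isHomogeneous_p, hgr.isHomogeneous_q, hgr.isHomogeneous_ε, hgr.isHomogeneous_β,
      hgr.isHomogeneous_δ, hgr.isHomogeneous_ζ, -aeval_eq_bind₁]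
  have pfaffian_eq_zero (i : Fin 5) : subPfaffian (skewMatrix
      ![f (C c) * f z, -f z, 0, f y, f y, -f z, -f x, f x, 0, 0]) i = 0 := by
    rw [← f_entries, ← skewMatrix_map, subPfaffian_map]
    exact Ideal.Quotient.eq_zero_iff_mem.2 (Submodule.mem_sup_left (hQ i))
  rw [subPfaffian_skewMatrix] at pfaffian_eq_zero
  have hxx : f x * f x = 0 := by simpa using pfaffian_eq_zero 0
  have hxy : f y * f x = 0 := by simpa using pfaffian_eq_zero 1
  have hyz : f y * f z = 0 := by simpa using pfaffian_eq_zero 2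
  have hyy : -(f z * f x) + f y * f y = 0 := by simpa using pfaffian_eq_zero 3
  have hzz : f (C c) * f z * f x - f z * f z = 0 := by simpa using pfaffian_eq_zero 4
  refine ⟨hx, hy, hz, ?_, ?_, ?_, ?_, ?_, hxz⟩ <;> rw [← Ideal.Quotient.eq_zero_iff_mem] <;>
    simp only [map_sub, map_mul]
  · exact hxx
  · linear_combination hxy
  · exact hyz
  · linear_combination hyy
  · linear_combination -hzz

end StructureConstants.IsGraded

theorem IsLinearRegularSequence.mem_ofList_of_nondeg (h : IsLinearRegularSequence I ls)
    (hnd : Nondeg K r I) {f : PS K r} (hf : f ∈ I ⊔ Ideal.ofList ls) (hf_hom : f.IsHomogeneous 1) :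
    f ∈ Ideal.ofList ls := by
  obtain ⟨j, hj, g, hg, rfl⟩ := h.exists_eq_add_sum_get_mul (n := 0) hf_hom hf
  have sum_hom : (∑ k, g k * ls.get k).IsHomogeneous 1 := IsHomogeneous.sum _ _ _ fun k _ => by
    simpa using (hg k).mul (h.isHomogeneous _ (ls.get_mem k))
  rw [hnd j hj (by simpa using hf_hom.sub sum_hom), zero_add]
  exact Ideal.sum_mem _ fun k _ => Ideal.mul_mem_left _ _ (Ideal.subset_span (ls.get_mem k))

theorem IsQuinticReduction.exists_eq_span_subPfaffian [IsAlgClosed K] [I.IsPrime]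
    (h : IsQuinticReduction I ls) (hnd : Nondeg K r I) :
    ∃ n : Fin 10 → PS K r, (∀ i, (n i).IsHomogeneous 1) ∧
      I = Ideal.span (Set.range (subPfaffian (skewMatrix n))) := by
  obtain ⟨x, y, z, c, t, ht, hgr, hPf⟩ := h.exists_pfaffianEntries
  have hn := hgr.isHomogeneous_pfaffianEntries h.toIsLinearRegularSequence ht.isHomogeneous_x
    ht.isHomogeneous_y ht.isHomogeneous_z
  refine ⟨_, hn, ?_⟩
  set Q := Ideal.span (Set.range (subPfaffian (skewMatrix
    (t.pfaffianEntries (aeval ls.get : _ →ₐ[K] PS K r).toRingHom x y z))))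
  have hQ : IsHomIdeal K r Q := isHomIdeal_span_subPfaffian hn
  have hQI : Q ≤ I := Ideal.span_le.2 (Set.range_subset_iff.2 hPf)
  have hQ_sup : Q ⊔ Ideal.ofList ls ≤ I ⊔ Ideal.ofList ls := sup_le_sup_right hQI _
  have hQt := hgr.isNormalTriple_sup ht.isHomogeneous_x ht.isHomogeneous_y ht.isHomogeneous_z
    (fun hxz => ht.x_mul_z (hQ_sup hxz)) fun i => Ideal.subset_span (Set.mem_range_self i)
  have sup_le_sup : I ⊔ Ideal.ofList ls ≤ Q ⊔ Ideal.ofList ls :=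
    ht.le_of_le h.isHomIdeal_sup (h.isHomogeneousBasisMod_of_isNormalTriple ht) hQt
      (hQ.sup (isHomIdeal_span fun l hl => ⟨1, h.isHomogeneous l hl⟩)) hQ_sup fun f hf hf_hom =>
        Submodule.mem_sup_right (h.mem_ofList_of_nondeg hnd hf hf_hom)
  exact (h.le_of_le_sup hQ hQI (le_sup_left.trans sup_le_sup)).antisymm hQI

end PfaffianVariety

section HomogeneousVectors

variable {K : Type} [Field K] {r : ℕ}

theorem coeff_hilbSeries_bot (n : ℕ) : PowerSeries.coeff n (hilbSeries K r ⊥) =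
    Module.finrank K (homogeneousSubmodule (Fin (r + 1)) K n) := by
  rw [hilbSeries, PowerSeries.coeff_mk, finrank_homogeneousSubmodule,
    finrank_quotComponent_of_forall_eq_zero fun f hf _ => hf]

theorem hilbSeries_bot_mul : hilbSeries K r ⊥ * (1 - PowerSeries.X) ^ (r + 1) = 1 := by
  have hilbSeries_bot : hilbSeries K r ⊥ = PowerSeries.mk fun n => ((r + n).choose r : ℤ) := by
    ext n
    rw [coeff_hilbSeries_bot, finrank_homogeneousSubmodule, PowerSeries.coeff_mk]
  rw [hilbSeries_bot, ← PowerSeries.mk_one_pow_eq_mk_choose_add, ← mul_pow,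
    PowerSeries.mk_one_mul_one_sub_eq_one, one_pow]

/-- The vectors over `S = K[x_0, …, x_r]` all of whose entries are homogeneous of degree `n`, as a
`K`-subspace. -/
def homogeneousVectors (K : Type) [Field K] (r : ℕ) (ι : Type) (n : ℕ) :
    Submodule K (ι → PS K r) :=
  Submodule.pi Set.univ fun _ => homogeneousSubmodule (Fin (r + 1)) K n

variable {ι : Type}

theorem mem_homogeneousVectors {n : ℕ} {v : ι → PS K r} :
    v ∈ homogeneousVectors K r ι n ↔ ∀ i, (v i).IsHomogeneous n := by
  simp [homogeneousVectors]

theorem homogeneousVectors_eq_range (n : ℕ) : homogeneousVectors K r ι n =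
    LinearMap.range ((homogeneousSubmodule (Fin (r + 1)) K n).subtype.compLeft ι) := by
  simp [homogeneousVectors, LinearMap.range_compLeft]

instance finite_homogeneousVectors [Finite ι] (n : ℕ) :
    Module.Finite K (homogeneousVectors K r ι n) := by
  rw [homogeneousVectors_eq_range]
  infer_instance

theorem finrank_homogeneousVectors [Fintype ι] (n : ℕ) :
    Module.finrank K (homogeneousVectors K r ι n) =
      Fintype.card ι * Module.finrank K (homogeneousSubmodule (Fin (r + 1)) K n) := by
  rw [homogeneousVectors_eq_range, LinearMap.finrank_range_of_inj, Module.finrank_pi_fintype,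
    Finset.sum_const, Finset.card_univ, smul_eq_mul]
  exact fun v w hvw => funext fun i => Subtype.ext (congrFun hvw i)

variable {q : ι → PS K r} {k : ℕ}

theorem homogeneousComponent_linearCombination [Fintype ι] (hq : ∀ i, (q i).IsHomogeneous k)
    (v : ι → PS K r) (n : ℕ) :
    homogeneousComponent (n + k) (Fintype.linearCombination (PS K r) q v) =
      Fintype.linearCombination (PS K r) q fun i => homogeneousComponent n (v i) := by
  simp only [Fintype.linearCombination_apply, smul_eq_mul, map_sum,
    homogeneousComponent_add_mul (hq _)]

theorem map_linearCombination_homogeneousVectors [Fintype ι] (hq : ∀ i, (q i).IsHomogeneous k)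
    (n : ℕ) :
    (homogeneousVectors K r ι n).map ((Fintype.linearCombination (PS K r) q).restrictScalars K) =
      homogeneousSubmodule (Fin (r + 1)) K (n + k) ⊓
        (Ideal.span (Set.range q)).restrictScalars K := by
  ext f
  constructor
  · rintro ⟨v, hv, rfl⟩
    exact ⟨IsHomogeneous.sum _ _ _ fun i _ => (mem_homogeneousVectors.1 hv i).mul (hq i),
      Ideal.sum_mem _ fun i _ => Ideal.mul_mem_left _ _ (Ideal.subset_span ⟨i, rfl⟩)⟩
  · rintro ⟨hf_hom, hf⟩
    obtain ⟨v, rfl⟩ := Ideal.mem_span_range_iff_exists_fun.1 hf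
    refine ⟨fun i => homogeneousComponent n (v i),
      mem_homogeneousVectors.2 fun i => homogeneousComponent_isHomogeneous _ _, ?_⟩
    exact (homogeneousComponent_linearCombination hq v n).symm.trans
      (homogeneousComponent_eq_self hf_hom)

theorem ker_linearCombination_le [Fintype ι] {N : Submodule (PS K r) (ι → PS K r)}
    (hq : ∀ i, (q i).IsHomogeneous k)
    (h : ∀ n, ∀ v ∈ homogeneousVectors K r ι n,
      Fintype.linearCombination (PS K r) q v = 0 → v ∈ N) :
    LinearMap.ker (Fintype.linearCombination (PS K r) q) ≤ N := by
  intro v hv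
  set B := ∑ i, ((v i).totalDegree + 1)
  have totalDegree_lt (i : ι) : (v i).totalDegree < B :=
    Finset.single_le_sum (f := fun i => (v i).totalDegree + 1) (fun _ _ => Nat.zero_le _)
      (Finset.mem_univ i)
  have v_eq : v = ∑ n ∈ Finset.range B, fun i => homogeneousComponent n (v i) := by
    ext1 i
    rw [Finset.sum_apply]
    conv_lhs => rw [← sum_homogeneousComponent (v i)]
    refine Finset.sum_subset (Finset.range_subset_range.2 (totalDegree_lt i)) fun n _ hn => ?_
    exact homogeneousComponent_eq_zero _ _ (by simpa using hn)
  rw [v_eq]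
  refine Submodule.sum_mem _ fun n _ => h n _
    (mem_homogeneousVectors.2 fun i => homogeneousComponent_isHomogeneous _ _) ?_
  rw [← homogeneousComponent_linearCombination hq, LinearMap.mem_ker.1 hv, map_zero]

theorem finrank_homogeneousVectors_inf_span_singleton_le [Finite ι]
    (hq : ∀ i, (q i).IsHomogeneous k) (n : ℕ) :
    (Module.finrank K (homogeneousVectors K r ι n ⊓
      (Submodule.span (PS K r) {q}).restrictScalars K : Submodule K (ι → PS K r)) : ℤ) ≤
    PowerSeries.coeff n (hilbSeries K r ⊥ * PowerSeries.X ^ k) := by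
  rw [PowerSeries.coeff_mul_X_pow']
  split_ifs with hkn
  · obtain ⟨n, rfl⟩ := Nat.exists_eq_add_of_le' hkn
    rw [Nat.add_sub_cancel, coeff_hilbSeries_bot, Nat.cast_le]
    refine (Submodule.finrank_mono ?_).trans (Submodule.finrank_map_le
      ((LinearMap.toSpanSingleton (PS K r) _ q).restrictScalars K)
      (homogeneousSubmodule (Fin (r + 1)) K n))
    rintro _ ⟨hv, hspan⟩
    obtain ⟨s, rfl⟩ := Submodule.mem_span_singleton.1 hspan
    refine ⟨homogeneousComponent n s, homogeneousComponent_isHomogeneous _ _, funext fun i => ?_⟩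
    exact (homogeneousComponent_add_mul (hq i) s n).symm.trans
      (homogeneousComponent_eq_self (mem_homogeneousVectors.1 hv i))
  · rw [← Nat.cast_zero, Nat.cast_le, Nat.le_zero, Submodule.finrank_eq_zero, eq_bot_iff]
    rintro _ ⟨hv, hspan⟩
    obtain ⟨s, rfl⟩ := Submodule.mem_span_singleton.1 hspan
    refine funext fun i => ?_
    rw [← homogeneousComponent_eq_self (mem_homogeneousVectors.1 hv i)]
    exact homogeneousComponent_mul_eq_zero (hq i) s (not_le.1 hkn)

end HomogeneousVectors

section BuchsbaumEisenbudExactness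

variable {K : Type} [Field K] {r : ℕ} {I : Ideal (PS K r)} {ls : List (PS K r)}

theorem IsQuinticReduction.finrank_inf (h : IsQuinticReduction I ls) (hlen : ls.length + 2 = r)
    (n : ℕ) :
    (Module.finrank K (homogeneousSubmodule (Fin (r + 1)) K n ⊓ I.restrictScalars K :
      Submodule K (PS K r)) : ℤ) =
    PowerSeries.coeff n (hilbSeries K r ⊥ *
      (5 * PowerSeries.X ^ 2 - 5 * PowerSeries.X ^ 3 + PowerSeries.X ^ 5)) := by
  have hilbSeries_I_mul : hilbSeries K r I * (1 - PowerSeries.X) ^ ls.length =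
      1 + 3 * PowerSeries.X + PowerSeries.X ^ 2 :=
    h.hilbSeries_sup_ofList.symm.trans h.hilbSeries_eq
  have hilbSeries_bot_mul_pow :
      hilbSeries K r ⊥ * (1 - PowerSeries.X) ^ (ls.length + 3) = 1 := by
    rw [show ls.length + 3 = r + 1 by omega, hilbSeries_bot_mul]
  have hilbSeries_sub : hilbSeries K r ⊥ - hilbSeries K r I = hilbSeries K r ⊥ *
      (5 * PowerSeries.X ^ 2 - 5 * PowerSeries.X ^ 3 + PowerSeries.X ^ 5) := by
    rw [pow_add] at hilbSeries_bot_mul_pow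
    linear_combination hilbSeries K r I * hilbSeries_bot_mul_pow -
      hilbSeries K r ⊥ * (1 - PowerSeries.X) ^ 3 * hilbSeries_I_mul
  rw [← hilbSeries_sub, map_sub, coeff_hilbSeries_bot, ← finrank_quotComponent_add (J := I) n,
    hilbSeries, PowerSeries.coeff_mk]
  push_cast
  ring

variable {q : Fin 5 → PS K r}

theorem IsQuinticReduction.finrank_homogeneousVectors_inf_ker
    (h : IsQuinticReduction (Ideal.span (Set.range q)) ls) (hlen : ls.length + 2 = r)
    (hq : ∀ i, (q i).IsHomogeneous 2) (n : ℕ) :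
    (Module.finrank K (homogeneousVectors K r (Fin 5) n ⊓
      LinearMap.ker ((Fintype.linearCombination (PS K r) q).restrictScalars K) :
        Submodule K (Fin 5 → PS K r)) : ℤ) =
    PowerSeries.coeff n (hilbSeries K r ⊥ * (5 * PowerSeries.X - PowerSeries.X ^ 3)) := by
  have rank_nullity := finrank_map_add_finrank_inf_ker
    ((Fintype.linearCombination (PS K r) q).restrictScalars K) (homogeneousVectors K r (Fin 5) n)
  rw [map_linearCombination_homogeneousVectors hq, finrank_homogeneousVectors, Fintype.card_fin]
    at rank_nullity
  have finrank_image := h.finrank_inf hlen (n + 2)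
  have factor_X_sq : hilbSeries K r ⊥ *
      (5 * PowerSeries.X ^ 2 - 5 * PowerSeries.X ^ 3 + PowerSeries.X ^ 5) =
      (PowerSeries.C 5 * hilbSeries K r ⊥ -
        hilbSeries K r ⊥ * (5 * PowerSeries.X - PowerSeries.X ^ 3)) * PowerSeries.X ^ 2 := by
    rw [map_ofNat]
    ring
  rw [factor_X_sq, PowerSeries.coeff_mul_X_pow, map_sub, PowerSeries.coeff_C_mul,
    coeff_hilbSeries_bot] at finrank_image
  zify at rank_nullity
  linarith

theorem IsQuinticReduction.linearIndependent
    (h : IsQuinticReduction (Ideal.span (Set.range q)) ls) (hlen : ls.length + 2 = r)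
    (hq : ∀ i, (q i).IsHomogeneous 2) : LinearIndependent K q := by
  have inf_ker_eq_bot := h.finrank_homogeneousVectors_inf_ker hlen hq 0
  have coeff_zero : PowerSeries.coeff 0
      (hilbSeries K r ⊥ * (5 * PowerSeries.X - PowerSeries.X ^ 3)) = 0 := by
    simp
  rw [coeff_zero, Nat.cast_eq_zero, Submodule.finrank_eq_zero] at inf_ker_eq_bot
  refine Fintype.linearIndependent_iff.2 fun c hc i => ?_
  have C_mem : (fun i => C (c i)) ∈ homogeneousVectors K r (Fin 5) 0 ⊓
      LinearMap.ker ((Fintype.linearCombination (PS K r) q).restrictScalars K) := by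
    refine ⟨mem_homogeneousVectors.2 fun i => isHomogeneous_C _ _, ?_⟩
    simpa [Fintype.linearCombination_apply, smul_eq_C_mul] using hc
  rw [inf_ker_eq_bot] at C_mem
  exact C_injective _ _ ((congrFun C_mem i).trans C_0.symm)

theorem not_dvd_of_linearIndependent {ι : Type} {q : ι → PS K r} {k : ℕ}
    (hq : ∀ i, (q i).IsHomogeneous k) (hlin : LinearIndependent K q) {i j : ι} (hij : i ≠ j) :
    ¬ q i ∣ q j := by
  rintro ⟨f, hf⟩
  have q_eq : q j = coeff 0 f • q i := by
    rw [← homogeneousComponent_eq_self (hq j), hf, mul_comm, smul_eq_C_mul,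
      ← homogeneousComponent_zero, ← homogeneousComponent_add_mul (hq i), zero_add]
  refine hlin.notMem_span_image (s := {i}) (x := j) (by simpa using hij.symm) ?_
  rw [q_eq, Set.image_singleton]
  exact Submodule.smul_mem _ _ (Submodule.mem_span_singleton_self _)

theorem exists_eq_smul_of_mul_comm {R ι : Type*} [CommRing R] [IsDomain R] {q v : ι → R} {i j : ι}
    (hprime : Prime (q i)) (hdvd : ¬ q i ∣ q j) (hcomm : ∀ k l, v k * q l = v l * q k) :
    ∃ t : R, v = t • q := by
  obtain ⟨t, ht⟩ := (hprime.dvd_or_dvd ⟨v j, (hcomm i j).trans (mul_comm _ _)⟩).resolve_right hdvd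
  refine ⟨t, funext fun k => mul_right_cancel₀ hprime.ne_zero ?_⟩
  rw [hcomm, ht, Pi.smul_apply, smul_eq_mul]
  ring

theorem two_le_totalDegree_of_mem (hI : I ≠ ⊤) (hhom : IsHomIdeal K r I) (hnd : Nondeg K r I)
    {f : PS K r} (hf : f ∈ I) (hf₀ : f ≠ 0) : 2 ≤ f.totalDegree := by
  by_contra! hlt
  refine hf₀ ?_
  rw [← sum_homogeneousComponent f]
  refine Finset.sum_eq_zero fun i hi => ?_
  have hi : i < 2 := (Finset.mem_range_succ_iff.1 hi).trans_lt hlt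
  interval_cases i
  · exact eq_zero_of_mem_of_isHomogeneous_zero hI (hhom f hf 0)
      (homogeneousComponent_isHomogeneous _ _)
  · exact hnd _ (hhom f hf 1) (homogeneousComponent_isHomogeneous _ _)

theorem isUnit_of_totalDegree_mul_le {f g : PS K r} (hfg : f * g ≠ 0)
    (hle : (f * g).totalDegree ≤ f.totalDegree) : IsUnit g := by
  rw [totalDegree_mul_of_isDomain (left_ne_zero_of_mul hfg) (right_ne_zero_of_mul hfg)] at hle
  have g_eq : g = C (coeff 0 g) := totalDegree_eq_zero_iff_eq_C.1 (by omega)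
  have coeff_ne_zero : coeff 0 g ≠ 0 := fun h₀ =>
    right_ne_zero_of_mul hfg (by rw [g_eq, h₀, C_0])
  rw [g_eq]
  exact (IsUnit.mk0 _ coeff_ne_zero).map C

theorem prime_of_isHomogeneous_two_of_mem [hI : I.IsPrime] (hhom : IsHomIdeal K r I)
    (hnd : Nondeg K r I) {p : PS K r} (hp : p.IsHomogeneous 2) (hpI : p ∈ I) (hp₀ : p ≠ 0) :
    Prime p := by
  have isUnit_of_mem {f g : PS K r} (hfg : p = f * g) (hf : f ∈ I) : IsUnit g := by
    rw [hfg] at hp hp₀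
    refine isUnit_of_totalDegree_mul_le hp₀ ((hp.totalDegree hp₀).trans_le ?_)
    exact two_le_totalDegree_of_mem hI.ne_top hhom hnd hf (left_ne_zero_of_mul hp₀)
  refine Irreducible.prime ⟨fun hu => hI.ne_top (Ideal.eq_top_of_isUnit_mem _ hpI hu), ?_⟩
  intro f g hfg
  rcases hI.mem_or_mem (hfg ▸ hpI) with hf | hg
  · exact Or.inr (isUnit_of_mem hfg hf)
  · exact Or.inl (isUnit_of_mem (hfg.trans (mul_comm f g)) hg)

theorem span_range_signedPfaffian {R : Type} [CommRing R] (n : Fin 10 → R) :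
    Ideal.span (Set.range (signedPfaffian n)) =
      Ideal.span (Set.range (subPfaffian (skewMatrix n))) := by
  refine le_antisymm (Ideal.span_le.2 ?_) (Ideal.span_le.2 ?_) <;> rintro _ ⟨i, rfl⟩
  · exact Ideal.mul_mem_left _ _ (Ideal.subset_span ⟨i, rfl⟩)
  · rw [SetLike.mem_coe, ← Ideal.unit_mul_mem_iff_mem _ (isUnit_one.neg.pow (i : ℕ))]
    exact Ideal.subset_span ⟨i, rfl⟩

variable {n : Fin 10 → PS K r}

theorem isHomogeneous_signedPfaffian (hn : ∀ i, (n i).IsHomogeneous 1) (i : Fin 5) :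
    (signedPfaffian n i).IsHomogeneous 2 := by
  have hPf := isHomogeneous_subPfaffian (isHomogeneous_skewMatrix hn) i
  rcases neg_one_pow_eq_or (PS K r) (i : ℕ) with hsign | hsign <;> rw [signedPfaffian, hsign]
  · rwa [one_mul]
  · rw [neg_one_mul]
    exact hPf.neg

theorem ker_skewMatrix_mulVecLin [hI : (Ideal.span (Set.range (signedPfaffian n))).IsPrime]
    (hnd : Nondeg K r (Ideal.span (Set.range (signedPfaffian n))))
    (hn : ∀ i, (n i).IsHomogeneous 1) (hlin : LinearIndependent K (signedPfaffian n)) :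
    LinearMap.ker (skewMatrix n).mulVecLin = Submodule.span (PS K r) {signedPfaffian n} := by
  refine le_antisymm (fun v hv => ?_) ?_
  · have prime_signedPfaffian : Prime (signedPfaffian n 0) :=
      prime_of_isHomogeneous_two_of_mem
        (isHomIdeal_span (by rintro _ ⟨i, rfl⟩; exact ⟨2, isHomogeneous_signedPfaffian hn i⟩)) hnd
        (isHomogeneous_signedPfaffian hn 0) (Ideal.subset_span ⟨0, rfl⟩) (hlin.ne_zero 0)
    obtain ⟨t, rfl⟩ := exists_eq_smul_of_mul_comm prime_signedPfaffian
      (not_dvd_of_linearIndependent (isHomogeneous_signedPfaffian hn) hlin zero_ne_one)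
      (mul_signedPfaffian_comm n hv)
    exact Submodule.smul_mem _ _ (Submodule.mem_span_singleton_self _)
  · rw [Submodule.span_singleton_le_iff_mem]
    exact skewMatrix_mulVec_signedPfaffian n

theorem range_skewMatrix_mulVecLin_le {R : Type} [CommRing R] (n : Fin 10 → R) :
    LinearMap.range (skewMatrix n).mulVecLin ≤
      LinearMap.ker (Fintype.linearCombination R (signedPfaffian n)) := by
  rintro _ ⟨v, rfl⟩
  suffices dotProduct ((skewMatrix n).mulVec v) (signedPfaffian n) = 0 from this
  rw [dotProduct_comm, Matrix.dotProduct_mulVec, ← Matrix.mulVec_transpose, skewMatrix_transpose,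
    Matrix.neg_mulVec, skewMatrix_mulVec_signedPfaffian, neg_zero, zero_dotProduct]

theorem map_mulVecLin_homogeneousVectors_le {ι κ : Type} [Fintype ι] {M : Matrix κ ι (PS K r)}
    {k : ℕ} (hM : ∀ i j, (M i j).IsHomogeneous k) (m : ℕ) :
    (homogeneousVectors K r ι m).map (M.mulVecLin.restrictScalars K) ≤
      homogeneousVectors K r κ (m + k) := by
  rintro _ ⟨v, hv, rfl⟩
  refine mem_homogeneousVectors.2 fun i => IsHomogeneous.sum _ _ _ fun j _ => ?_
  rw [add_comm m]
  exact (hM i j).mul (mem_homogeneousVectors.1 hv j)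

theorem coeff_le_finrank_map_skewMatrix (hn : ∀ i, (n i).IsHomogeneous 1)
    (hker : LinearMap.ker (skewMatrix n).mulVecLin = Submodule.span (PS K r) {signedPfaffian n})
    (m : ℕ) :
    PowerSeries.coeff (m + 1) (hilbSeries K r ⊥ * (5 * PowerSeries.X - PowerSeries.X ^ 3)) ≤
      (Module.finrank K ((homogeneousVectors K r (Fin 5) m).map
        ((skewMatrix n).mulVecLin.restrictScalars K)) : ℤ) := by
  have rank_nullity := finrank_map_add_finrank_inf_ker
    ((skewMatrix n).mulVecLin.restrictScalars K) (homogeneousVectors K r (Fin 5) m)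
  rw [LinearMap.ker_restrictScalars, hker, finrank_homogeneousVectors, Fintype.card_fin]
    at rank_nullity
  have finrank_inf_le := finrank_homogeneousVectors_inf_span_singleton_le
    (isHomogeneous_signedPfaffian hn) m
  have factor_X : hilbSeries K r ⊥ * (5 * PowerSeries.X - PowerSeries.X ^ 3) =
      (PowerSeries.C 5 * hilbSeries K r ⊥ - hilbSeries K r ⊥ * PowerSeries.X ^ 2) *
        PowerSeries.X := by
    rw [map_ofNat]
    ring
  rw [factor_X, PowerSeries.coeff_succ_mul_X, map_sub, PowerSeries.coeff_C_mul,
    coeff_hilbSeries_bot]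
  zify at rank_nullity
  linarith

theorem IsQuinticReduction.ker_linearCombination_signedPfaffian
    (h : IsQuinticReduction (Ideal.span (Set.range (signedPfaffian n))) ls)
    (hlen : ls.length + 2 = r) (hn : ∀ i, (n i).IsHomogeneous 1)
    (hker : LinearMap.ker (skewMatrix n).mulVecLin = Submodule.span (PS K r) {signedPfaffian n}) :
    LinearMap.ker (Fintype.linearCombination (PS K r) (signedPfaffian n)) =
      LinearMap.range (skewMatrix n).mulVecLin := by
  have hq := isHomogeneous_signedPfaffian hn
  have range_le := range_skewMatrix_mulVecLin_le n
  refine le_antisymm (ker_linearCombination_le hq fun m v hv hv₀ => ?_) range_le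
  have finrank_inf_ker := h.finrank_homogeneousVectors_inf_ker hlen hq m
  cases m with
  | zero =>
    rw [show PowerSeries.coeff 0 (hilbSeries K r ⊥ * (5 * PowerSeries.X - PowerSeries.X ^ 3)) = 0
      by simp, Nat.cast_eq_zero, Submodule.finrank_eq_zero] at finrank_inf_ker
    have v_mem_bot : v ∈ (⊥ : Submodule K (Fin 5 → PS K r)) := finrank_inf_ker ▸ ⟨hv, hv₀⟩
    rw [(Submodule.mem_bot K).1 v_mem_bot]
    exact zero_mem _
  | succ m =>
    have map_eq : (homogeneousVectors K r (Fin 5) m).map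
        ((skewMatrix n).mulVecLin.restrictScalars K) = homogeneousVectors K r (Fin 5) (m + 1) ⊓
          LinearMap.ker ((Fintype.linearCombination (PS K r)
            (signedPfaffian n)).restrictScalars K) := by
      refine Submodule.eq_of_le_of_finrank_le (le_inf (map_mulVecLin_homogeneousVectors_le
        (isHomogeneous_skewMatrix hn) m) ?_) ?_
      · rintro _ ⟨w, -, rfl⟩
        exact range_le ⟨w, rfl⟩
      · have finrank_map_ge := coeff_le_finrank_map_skewMatrix hn hker m
        rwa [← finrank_inf_ker, Nat.cast_le] at finrank_map_ge
    obtain ⟨w, -, hw⟩ := map_eq.ge ⟨hv, hv₀⟩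
    exact ⟨w, hw⟩

end BuchsbaumEisenbudExactness

section PureResolutions

variable {K : Type} [Field K] {r : ℕ}

/-- The generators of a graded free module concentrated in the single row `s`. -/
def rowEquiv {β : ℕ → ℕ} {s m : ℕ} (hβ : ∀ j, β j = if j = s then m else 0) :
    ((j : ℕ) × Fin (β j)) ≃ Fin m where
  toFun x := ⟨x.2, x.2.isLt.trans_le (by rw [hβ]; split_ifs <;> simp)⟩
  invFun t := ⟨s, t.cast (by rw [hβ, if_pos rfl])⟩
  left_inv := by
    rintro ⟨j, t⟩
    obtain rfl : j = s := by
      by_contra hj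
      exact absurd t.isLt (by simp [hβ, hj])
    rfl
  right_inv _ := rfl

theorem row_eq {β : ℕ → ℕ} {s m : ℕ} (hβ : ∀ j, β j = if j = s then m else 0) {j : ℕ}
    (t : Fin (β j)) : j = s := by
  by_contra hj
  exact absurd t.isLt (by simp [hβ, hj])

/-- The coordinates of a graded free module concentrated in a single row. -/
def rowCoord (K : Type) [Field K] (r : ℕ) {β : ℕ → ℕ} {s m : ℕ}
    (hβ : ∀ j, β j = if j = s then m else 0) : FreeGr K r β ≃ₗ[PS K r] (Fin m → PS K r) :=
  (Finsupp.domLCongr (rowEquiv hβ)).trans (Finsupp.linearEquivFunOnFinite _ _ _)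

section RowCoord

variable {β : ℕ → ℕ} {s m : ℕ} (hβ : ∀ j, β j = if j = s then m else 0)

theorem rowCoord_single (x : (j : ℕ) × Fin (β j)) :
    rowCoord K r hβ (Finsupp.single x 1) = Pi.single (rowEquiv hβ x) 1 := by
  simp [rowCoord]

theorem rowCoord_symm_apply (v : Fin m → PS K r) (x : (j : ℕ) × Fin (β j)) :
    (rowCoord K r hβ).symm v x = v (rowEquiv hβ x) := by
  simp [rowCoord]

end RowCoord

theorem hasBettiDiagram_of_pure {b : ℕ → ℕ → ℕ} {β s : ℕ → ℕ} (hs : Monotone s)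
    (hb : ∀ i j, b (i + 1) j = if j = s i then β i else 0)
    {q : Fin (β 0) → PS K r} (hq : ∀ t, (q t).IsHomogeneous (1 + s 0))
    {φ : ∀ i, (Fin (β (i + 1)) → PS K r) →ₗ[PS K r] (Fin (β i) → PS K r)}
    (hφ : ∀ i t t', (φ i (Pi.single t 1) t').IsHomogeneous (s (i + 1) + 1 - s i))
    (exact_zero : Function.Exact (φ 0) (Fintype.linearCombination (PS K r) q))
    (exact_succ : ∀ i, Function.Exact (φ (i + 1)) (φ i)) :
    HasBettiDiagram K r (Ideal.span (Set.range q)) b := by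
  set E := fun i => rowCoord K r (hb i)
  refine ⟨fun i => (E i).symm ∘ₗ φ i ∘ₗ (E (i + 1)), Fintype.linearCombination (PS K r) q ∘ₗ E 0,
    fun j t => ?_, fun i j t j' t' => Or.inr ⟨s (i + 1) + 1 - s i, ?_, ?_, ?_⟩, ?_, ?_, fun i => ?_⟩
  · simpa [E, rowCoord_single, row_eq (hb 0) t] using hq (rowEquiv (hb 0) ⟨j, t⟩)
  · have := hs (Nat.le_add_right i 1)
    omega
  · have := hs (Nat.le_add_right i 1)
    rw [row_eq (hb i) t', row_eq (hb (i + 1)) t]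
    omega
  · simp [E, rowCoord_single, rowCoord_symm_apply, hφ]
  · rw [LinearMap.range_comp_of_range_eq_top _ (LinearEquiv.range _),
      Fintype.range_linearCombination, Ideal.span]
  · refine LinearMap.exact_iff.1 (exact_zero.of_ladder_linearEquiv_of_exact
      (e₁ := (E 1).symm) (e₂ := (E 0).symm) (e₃ := .refl _ _) ?_ ?_) <;> ext <;> simp
  · refine LinearMap.exact_iff.1 ((exact_succ i).of_ladder_linearEquiv_of_exact
      (e₁ := (E (i + 2)).symm) (e₂ := (E (i + 1)).symm) (e₃ := (E i).symm) ?_ ?_) <;> ext <;> simp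

end PureResolutions

section BuchsbaumEisenbudComplex

variable {K : Type} [Field K] {r : ℕ}

/-- The rank of the `(i + 1)`-st free module of the Buchsbaum–Eisenbud complex. -/
def buchsbaumEisenbudRank : ℕ → ℕ
  | 0 => 5
  | 1 => 5
  | 2 => 1
  | _ + 3 => 0

/-- The generators of the `(i + 1)`-st free module of the Buchsbaum–Eisenbud complex have degree
`i + 1 + buchsbaumEisenbudRow i`. -/
def buchsbaumEisenbudRow : ℕ → ℕ
  | 0 => 1
  | 1 => 1
  | _ + 2 => 2

theorem monotone_buchsbaumEisenbudRow : Monotone buchsbaumEisenbudRow :=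
  monotone_nat_of_le_succ fun
    | 0 => le_rfl
    | 1 => Nat.le_succ 1
    | _ + 2 => le_rfl

/-- The differentials of the Buchsbaum–Eisenbud complex
`0 → S(-5) → S(-3)⁵ → S(-2)⁵ → S` of a skew-symmetric `5 × 5` matrix, except the last one, which is
given by the signed Pfaffians. -/
def buchsbaumEisenbudMap {R : Type} [CommRing R] (n : Fin 10 → R) : ∀ i,
    (Fin (buchsbaumEisenbudRank (i + 1)) → R) →ₗ[R] (Fin (buchsbaumEisenbudRank i) → R)
  | 0 => (skewMatrix n).mulVecLin
  | 1 => LinearMap.toSpanSingleton R (Fin 5 → R) (signedPfaffian n) ∘ₗ LinearMap.proj (0 : Fin 1)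
  | _ + 2 => 0

variable {n : Fin 10 → PS K r}

theorem isHomogeneous_buchsbaumEisenbudMap (hn : ∀ i, (n i).IsHomogeneous 1) : ∀ i t t',
    (buchsbaumEisenbudMap n i (Pi.single t 1) t').IsHomogeneous
      (buchsbaumEisenbudRow (i + 1) + 1 - buchsbaumEisenbudRow i)
  | 0, t, t' => by
    have isHomogeneous_col (j i : Fin 5) :
        ((skewMatrix n).mulVec (Pi.single j 1) i).IsHomogeneous 1 := by
      rw [Matrix.mulVec_single_one]
      exact isHomogeneous_skewMatrix hn i j
    exact isHomogeneous_col t t'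
  | 1, t, t' => by
    obtain rfl : t = (0 : Fin 1) := Subsingleton.elim (α := Fin 1) _ _
    suffices ((1 : PS K r) * signedPfaffian n t').IsHomogeneous 2 from this
    rw [one_mul]
    exact isHomogeneous_signedPfaffian hn t'
  | _ + 2, _, _ => isHomogeneous_zero _ _ _

theorem exact_buchsbaumEisenbudMap (hne : signedPfaffian n ≠ 0)
    (hker : LinearMap.ker (skewMatrix n).mulVecLin = Submodule.span (PS K r) {signedPfaffian n}) :
    ∀ i, Function.Exact (buchsbaumEisenbudMap n (i + 1)) (buchsbaumEisenbudMap n i)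
  | 0 => by
    refine LinearMap.exact_iff.2 (hker.trans ?_)
    rw [← LinearMap.range_toSpanSingleton]
    refine (LinearMap.range_comp_of_range_eq_top _ ?_).symm
    exact LinearMap.range_eq_top.2 (LinearMap.proj_surjective _)
  | 1 => by
    refine (LinearMap.exact_zero_iff_injective _ _).2 fun v w hvw => ?_
    have v_zero_eq : v (0 : Fin 1) = w (0 : Fin 1) := smul_left_injective (PS K r) hne hvw
    exact funext fun i => by rwa [Subsingleton.elim (α := Fin 1) i 0]
  | _ + 2 => fun _ => iff_of_true rfl ⟨0, Subsingleton.elim (α := Fin 0 → PS K r) _ _⟩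

theorem IsQuinticReduction.hasBettiDiagram {b : ℕ → ℕ → ℕ} {ls : List (PS K r)}
    [(Ideal.span (Set.range (signedPfaffian n))).IsPrime]
    (h : IsQuinticReduction (Ideal.span (Set.range (signedPfaffian n))) ls)
    (hlen : ls.length + 2 = r) (hnd : Nondeg K r (Ideal.span (Set.range (signedPfaffian n))))
    (hn : ∀ i, (n i).IsHomogeneous 1)
    (hb : ∀ i j, b (i + 1) j = if j = buchsbaumEisenbudRow i then buchsbaumEisenbudRank i else 0) :
    HasBettiDiagram K r (Ideal.span (Set.range (signedPfaffian n))) b := by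
  have hlin := h.linearIndependent hlen (isHomogeneous_signedPfaffian hn)
  have hker := ker_skewMatrix_mulVecLin hnd hn hlin
  refine hasBettiDiagram_of_pure monotone_buchsbaumEisenbudRow hb (isHomogeneous_signedPfaffian hn)
    (isHomogeneous_buchsbaumEisenbudMap hn) ?_
    (exact_buchsbaumEisenbudMap (fun h₀ => hlin.ne_zero 0 (congrFun h₀ 0)) hker)
  exact LinearMap.exact_iff.2 (h.ker_linearCombination_signedPfaffian hlen hn hker)

end BuchsbaumEisenbudComplex

section Cones

variable {K : Type} [Field K] {r : ℕ}

theorem exists_linearEquiv_apply_eq {V : Type*} [AddCommGroup V] [Module K V] {v w : V}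
    (hv : v ≠ 0) (hw : w ≠ 0) : ∃ g : V ≃ₗ[K] V, g v = w := by
  obtain ⟨g, hg⟩ := Submodule.exists_linearEquiv_restrict_eq
    ((LinearEquiv.toSpanNonzeroSingleton K V v hv).symm ≪≫ₗ
      LinearEquiv.toSpanNonzeroSingleton K V w hw)
  refine ⟨g, (hg ⟨v, Submodule.mem_span_singleton_self v⟩).symm.trans ?_⟩
  rw [LinearEquiv.trans_apply, ← LinearEquiv.coord, LinearEquiv.coord_self,
    LinearEquiv.toSpanNonzeroSingleton_one]

theorem exists_matrix_eq_toMvPolynomial {ι σ : Type*} [Fintype σ] {n : ι → MvPolynomial σ K}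
    (hn : ∀ i, (n i).IsHomogeneous 1) : ∃ A : Matrix ι σ K, n = A.toMvPolynomial := by
  have mem_span_X i : n i ∈ Submodule.span K (Set.range (X : σ → MvPolynomial σ K)) := by
    rw [← homogeneousSubmodule_one_eq_span_X]
    exact hn i
  choose A hA using fun i => (Submodule.mem_span_range_iff_exists_fun K).1 (mem_span_X i)
  refine ⟨Matrix.of A, funext fun i => (hA i).symm.trans (Finset.sum_congr rfl fun j _ => ?_)⟩
  rw [smul_eq_C_mul, C_mul_X_eq_monomial, Matrix.of_apply]

/-- The linear change of coordinates of a polynomial ring induced by a linear automorphism of the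
affine space on which the polynomials are functions. -/
def linearChange {σ : Type*} [Fintype σ] [DecidableEq σ] (g : (σ → K) ≃ₗ[K] (σ → K)) :
    MvPolynomial σ K ≃ₐ[K] MvPolynomial σ K :=
  AlgEquiv.ofAlgHom (bind₁ (LinearMap.toMatrix' g.toLinearMap).toMvPolynomial)
    (bind₁ (LinearMap.toMatrix' g.symm.toLinearMap).toMvPolynomial)
    (algHom_ext fun i => by
      rw [AlgHom.comp_apply, bind₁_X_right, ← Matrix.toMvPolynomial_mul, ← LinearMap.toMatrix'_comp,
        LinearEquiv.symm_comp, LinearMap.toMatrix'_id, Matrix.toMvPolynomial_one, AlgHom.id_apply])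
    (algHom_ext fun i => by
      rw [AlgHom.comp_apply, bind₁_X_right, ← Matrix.toMvPolynomial_mul, ← LinearMap.toMatrix'_comp,
        LinearEquiv.comp_symm, LinearMap.toMatrix'_id, Matrix.toMvPolynomial_one, AlgHom.id_apply])

theorem linearChange_toMvPolynomial {ι σ : Type*} [Fintype σ] [DecidableEq σ]
    (g : (σ → K) ≃ₗ[K] (σ → K)) (A : Matrix ι σ K) (i : ι) :
    linearChange g (A.toMvPolynomial i) =
      (A * LinearMap.toMatrix' g.toLinearMap).toMvPolynomial i :=
  (Matrix.toMvPolynomial_mul A _ i).symm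

theorem isGrAut_linearChange (g : (Fin (r + 1) → K) ≃ₗ[K] (Fin (r + 1) → K)) :
    IsGrAut K r (linearChange g) := fun i => by
  rw [← Matrix.toMvPolynomial_one, linearChange_toMvPolynomial]
  exact Matrix.toMvPolynomial_isHomogeneous _ i

theorem toMvPolynomial_eq_rename_castSucc {ι : Type*} {A : Matrix ι (Fin (r + 1)) K}
    (hA : ∀ i, A i (Fin.last r) = 0) (i : ι) :
    A.toMvPolynomial i =
      rename Fin.castSucc ((A.submatrix id (Fin.castSucc : Fin r → _)).toMvPolynomial i) := by
  rw [Matrix.toMvPolynomial, Fin.sum_univ_castSucc, hA, monomial_zero, add_zero,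
    Matrix.toMvPolynomial, map_sum]
  refine Finset.sum_congr rfl fun j _ => ?_
  rw [rename_monomial, Finsupp.mapDomain_single, Matrix.submatrix_apply, id]

theorem isConeIdeal_map_aeval {ι : Type*} [Fintype ι] (hι : Fintype.card ι < r + 1)
    {n : ι → PS K r} (hn : ∀ i, (n i).IsHomogeneous 1) (J : Ideal (MvPolynomial ι K)) :
    IsConeIdeal K r (J.map (aeval n)) := by
  obtain ⟨A, rfl⟩ := exists_matrix_eq_toMvPolynomial hn
  obtain ⟨v, hAv, hv⟩ : ∃ v, A.mulVecLin v = 0 ∧ v ≠ 0 :=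
    (Submodule.ne_bot_iff _).1 (LinearMap.ker_ne_bot_of_finrank_lt (by simpa using hι))
  obtain ⟨g, hg⟩ := exists_linearEquiv_apply_eq (K := K)
    (Pi.single_ne_zero_iff.2 one_ne_zero : Pi.single (Fin.last r) 1 ≠ 0) hv
  have last_column_eq_zero : (A * LinearMap.toMatrix' g.toLinearMap).col (Fin.last r) = 0 := by
    rw [← Matrix.mulVec_single_one, ← Matrix.mulVec_mulVec, LinearMap.toMatrix'_mulVec]
    exact (congrArg A.mulVec hg).trans hAv
  refine ⟨linearChange g, isGrAut_linearChange g, J.map (aeval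
    ((A * LinearMap.toMatrix' g.toLinearMap).submatrix id Fin.castSucc).toMvPolynomial), ?_⟩
  refine (Ideal.map_mapₐ (aeval _) (linearChange g).toAlgHom).trans ?_
  rw [Ideal.map_mapₐ]
  congr 1
  refine algHom_ext fun i => ?_
  rw [AlgHom.comp_apply, AlgHom.comp_apply, aeval_X, aeval_X]
  exact (linearChange_toMvPolynomial g A i).trans
    (toMvPolynomial_eq_rename_castSucc (congrFun last_column_eq_zero) i)

theorem span_range_subPfaffian_eq_map_aeval (n : Fin 10 → PS K r) :
    Ideal.span (Set.range (subPfaffian (skewMatrix n))) =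
      (Ideal.span (Set.range (subPfaffian
        (skewMatrix (X : Fin 10 → MvPolynomial (Fin 10) K))))).map (aeval n) := by
  rw [Ideal.map_span, ← Set.range_comp]
  congr 2
  funext i
  rw [Function.comp_apply]
  refine Eq.trans ?_ (subPfaffian_map (aeval n : _ →ₐ[K] PS K r).toRingHom _ i)
  rw [skewMatrix_map]
  congr 2
  funext j
  exact (aeval_X n j).symm

theorem isConeIdeal_span_subPfaffian (hr : 10 ≤ r) {n : Fin 10 → PS K r}
    (hn : ∀ i, (n i).IsHomogeneous 1) :
    IsConeIdeal K r (Ideal.span (Set.range (subPfaffian (skewMatrix n)))) := by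
  rw [span_range_subPfaffian_eq_map_aeval]
  exact isConeIdeal_map_aeval (by rw [Fintype.card_fin]; lia) hn _

end Cones

section Socles

variable {K : Type} [Field K] {r : ℕ}

theorem map_socle {B B' : Type} [CommRing B] [CommRing B'] [Algebra K B] [Algebra K B']
    (e : B ≃ₐ[K] B') (m : Ideal B) :
    (socle K B m).map e.toLinearMap = socle K B' (m.map e) := by
  ext y
  constructor
  · rintro ⟨x, hx, rfl⟩ z' hz'
    obtain ⟨z, hz, rfl⟩ := (Ideal.mem_map_iff_of_surjective e e.surjective).1 hz'
    exact (map_mul e z x).symm.trans ((congrArg e (hx z hz)).trans (map_zero e))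
  · refine fun hy => ⟨e.symm y, fun z hz => e.injective ?_, e.apply_symm_apply y⟩
    rw [map_mul, e.apply_symm_apply, hy _ (Ideal.mem_map_of_mem e hz), map_zero]

theorem mem_span_range_X {f : PS K r} (hf : f.IsHomogeneous 1) :
    f ∈ Ideal.span (Set.range (X : Fin (r + 1) → PS K r)) := by
  simpa only [pow_one] using! mem_pow_idealOfVars_of_isHomogeneous hf le_rfl

theorem mk_mem_socle_iff {N : Ideal (PS K r)} {f : PS K r} :
    Ideal.Quotient.mk N f ∈ socle K (PS K r ⧸ N) (maxIdl K r N) ↔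
      ∀ g : PS K r, g.IsHomogeneous 1 → f * g ∈ N := by
  have mk_mul_eq_zero_iff (g : PS K r) :
      Ideal.Quotient.mk N g * Ideal.Quotient.mk N f = 0 ↔ f * g ∈ N := by
    rw [mul_comm, ← map_mul, Ideal.Quotient.eq_zero_iff_mem]
  refine ⟨fun hf g hg => (mk_mul_eq_zero_iff g).1
    (hf _ (Ideal.mem_map_of_mem _ (mem_span_range_X hg))), fun hf => ?_⟩
  suffices maxIdl K r N ≤ Ideal.torsionOf _ _ (Ideal.Quotient.mk N f) from fun z hz => this hz
  rw [maxIdl, Ideal.map_le_iff_le_comap, Ideal.span_le, Set.range_subset_iff]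
  exact fun i => (mk_mul_eq_zero_iff _).2 (hf _ (isHomogeneous_X K i))

theorem IsQuinticReduction.mem_sup_of_ne_two {I : Ideal (PS K r)} [I.IsPrime] {ls : List (PS K r)}
    (h : IsQuinticReduction I ls) {n : ℕ} (hn : n ≠ 2) {f : PS K r} (hf : f.IsHomogeneous n)
    (hmul : ∀ g : PS K r, g.IsHomogeneous 1 → f * g ∈ I ⊔ Ideal.ofList ls) :
    f ∈ I ⊔ Ideal.ofList ls := by
  match n with
  | 0 =>
    rw [← totalDegree_zero_iff_isHomogeneous, totalDegree_eq_zero_iff_eq_C] at hf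
    rw [hf] at hmul ⊢
    by_contra hc
    have coeff_ne_zero : coeff 0 f ≠ 0 := fun h₀ => hc (by rw [h₀, map_zero]; exact zero_mem _)
    have finrank_one := h.finrank_quotComponent_one
    rw [finrank_quotComponent_eq_zero_iff.2 fun g hg => (Ideal.unit_mul_mem_iff_mem _
      (coeff_ne_zero.isUnit.map C)).1 (hmul g hg)] at finrank_one
    exact absurd finrank_one (by decide)
  | 1 => exact h.mem_sup_of_forall_mul_mem hf hmul
  | _ + 3 => exact h.mem_sup_of_three_le (by omega) hf

theorem IsQuinticReduction.socle_eq {I : Ideal (PS K r)} [I.IsPrime] {ls : List (PS K r)}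
    (h : IsQuinticReduction I ls) :
    socle K (PS K r ⧸ I ⊔ Ideal.ofList ls) (maxIdl K r (I ⊔ Ideal.ofList ls)) =
      quotComponent K r (I ⊔ Ideal.ofList ls) 2 := by
  have hhom := h.isHomIdeal_sup
  ext x
  rw [mem_quotComponent]
  constructor
  · obtain ⟨f, rfl⟩ := Ideal.Quotient.mk_surjective x
    intro hf
    have component_mul_mem n (g : PS K r) (hg : g.IsHomogeneous 1) :
        homogeneousComponent n f * g ∈ I ⊔ Ideal.ofList ls := by
      rw [← homogeneousComponent_add_mul hg]
      exact hhom _ (mk_mem_socle_iff.1 hf g hg) _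
    refine ⟨_, homogeneousComponent_isHomogeneous 2 f,
      (Ideal.Quotient.mk_eq_mk_iff_sub_mem _ _).2 (hhom.mem_iff.2 fun n => ?_)⟩
    rw [map_sub, homogeneousComponent_of_mem (homogeneousComponent_isHomogeneous 2 f)]
    rcases eq_or_ne n 2 with rfl | hn
    · rw [if_pos rfl, sub_self]
      exact zero_mem _
    · rw [if_neg hn, zero_sub, neg_mem_iff]
      exact h.mem_sup_of_ne_two hn (homogeneousComponent_isHomogeneous n f) (component_mul_mem n)
  · rintro ⟨f, hf, rfl⟩
    exact mk_mem_socle_iff.2 fun g hg => h.mem_sup_of_three_le le_rfl (hf.mul hg)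

theorem IsQuinticReduction.isArithGorenstein {I : Ideal (PS K r)} [I.IsPrime] {ls : List (PS K r)}
    (h : IsQuinticReduction I ls) {d : ℕ} (hdim : DimEq K r I d) (hlen : ls.length = d + 1) :
    IsArithGorenstein K r I := by
  refine ⟨d + 1, ls.map (Ideal.Quotient.mk I), hdim, by rw [List.length_map, hlen],
    List.forall_mem_map.2 fun l hl =>
      Ideal.mem_map_of_mem _ (mem_span_range_X (h.isHomogeneous l hl)),
    isRegSeq_map_mk_iff.2 h.isWeaklyRegular, ?_⟩
  have span_eq : Ideal.span {x | x ∈ ls.map (Ideal.Quotient.mk I)} =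
      (Ideal.ofList ls).map (Ideal.Quotient.mkₐ K I) :=
    (Ideal.map_ofList (Ideal.Quotient.mk I) ls).symm
  let e := (Ideal.quotientEquivAlgOfEq K span_eq).trans
    (DoubleQuot.quotQuotEquivQuotSupₐ K I (Ideal.ofList ls))
  rw [← LinearEquiv.finrank_map_eq e.toLinearEquiv]
  refine Eq.trans (congrArg (fun V : Submodule K _ => Module.finrank K V) ?_)
    h.finrank_quotComponent_two
  refine (map_socle (B := (PS K r ⧸ I) ⧸ Ideal.span {x | x ∈ ls.map (Ideal.Quotient.mk I)})
    e _).trans (Eq.trans ?_ h.socle_eq)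
  rw [maxIdl, Ideal.map_map]
  exact congrArg _ (Ideal.map_map (_ : PS K r →+* _) e.toRingEquiv.toRingHom)

end Socles

end AMD

/-- **Theorem 2.2 (a).**  A non-degenerate arithmetically Cohen-Macaulay variety
`X ⊆ ℙ^r_K` of degree `5` and codimension `3` which is not a cone satisfies
`dim X ≤ 6`, is arithmetically Gorenstein, and is the Pfaffian variety defined by the
five `4 × 4` Pfaffians of a skew-symmetric `5 × 5` matrix of linear forms; its minimal
free resolution is the Buchsbaum-Eisenbud complex `0 → S(-5) → S⁵(-3) → S⁵(-2) → I_X → 0`. -/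
theorem degree_five_codim_three_ACM
    (K : Type) [Field K] [IsAlgClosed K] (r : ℕ)
    (I : Ideal (PS K r)) (hprime : I.IsPrime)
    (hhom : AMD.IsHomIdeal K r I) (hnd : AMD.Nondeg K r I)
    (d : ℕ) (hdim : AMD.DimEq K r I d) (hcodim : d + 3 = r)
    (hdeg : AMD.DegreeEq K r I d 5)
    (hcone : ¬ AMD.IsConeIdeal K r I)
    (hACM : AMD.IsACM K r I) :
    d ≤ 6 ∧ AMD.IsArithGorenstein K r I ∧ AMD.IsPfaffianVariety K r I ∧
    AMD.HasBettiDiagram K r I (fun i j => match i, j with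
      | 1, 1 => 5 | 2, 1 => 5 | 3, 2 => 1 | _, _ => 0) := by
  obtain ⟨ls, hlen, h⟩ := AMD.exists_isQuinticReduction hprime.ne_top hhom hnd hdim hcodim hdeg hACM
  obtain ⟨n, hn, rfl⟩ := h.exists_eq_span_subPfaffian hnd
  refine ⟨?_, h.isArithGorenstein hdim hlen,
    ⟨AMD.skewMatrix n, AMD.skewMatrix_transpose n, AMD.isHomogeneous_skewMatrix hn, rfl⟩, ?_⟩
  · by_contra! hd
    exact hcone (AMD.isConeIdeal_span_subPfaffian (by lia) hn)
  · rw [← AMD.span_range_signedPfaffian] at h hprime hnd ⊢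
    refine h.hasBettiDiagram (by lia) hnd hn fun i j => ?_
    rcases i with _ | _ | _ | i <;> rcases j with _ | _ | _ | j <;> rfl
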